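/- arXiv:2103.16126 — 4 statements merged into one kernel-verified Lean document; each statement's English description precedes it below -/
import Mathlib

section
/- For every finite Coxeter system (W, S) over a nonempty finite index set B, there exists a Hamiltonian circuit map for (W, S): a bijection θ : ℤ/kℤ → W with k = |W| such that for every t ∈ ℤ/kℤ there is an index i ∈ B with θ(t+1) = sᵢ · θ(t). -/
/-- A Hamiltonian circuit map for a finite group `W` with respect to a set `S ⊆ W`:
a bijection `θ : ℤ/kℤ → W` with `k = |W|` such that `θ(t+1)·θ(t)⁻¹ ∈ S` for all `t`. -/
def IsHamiltonianCircuitMap {W : Type*} [Group W] (S : Set W)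
    (θ : ZMod (Nat.card W) → W) : Prop :=
  Function.Bijective θ ∧ ∀ t, θ (t + 1) * (θ t)⁻¹ ∈ S

/-!
The defining relations of a Coxeter group `W` are also satisfied by reflections whose pairings
`-2 * cos (π / mᵢⱼ)` are multiplied by `exp cᵢⱼ`, for an arbitrary antisymmetric `c`. If `W` is
finite, averaging yields an invariant inner product, which makes the pairings symmetric after
rescaling the roots; hence `c` is a coboundary along the edges of the Coxeter graph. As `c` is
arbitrary, this graph is a forest.

Thus every nonempty set of simple reflections contains some `s` that fails to commute with at most
one of the others. A Hamilton circuit of the parabolic subgroup generated by the others extends to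
the one generated together with `s`: the right cosets of the smaller subgroup are joined to the
circuit one at a time, across squares `w, t w, t s w, s w` with `s t = t s`. For two simple
reflections the alternating words form a circuit.
-/

section CyclicPermutations

variable {α : Type*} {σ f : Equiv.Perm α} {U : Set α} {a b y : α}

lemma isCycleOn_of_forall_sameCycle (hfix : ∀ x ∉ U, σ x = x) (ha : ∀ y ∈ U, σ.SameCycle a y) :
    σ.IsCycleOn U := by
  have hmem (x : α) : σ x ∈ U ↔ x ∈ U := by
    refine ⟨fun h => by_contra fun hx => hx (hfix x hx ▸ h), fun h => by_contra fun hx => hx ?_⟩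
    rwa [σ.injective (hfix _ hx)]
  exact ⟨σ.bijOn hmem, fun x hx y hy => (ha x hx).symm.trans (ha y hy)⟩

lemma sameCycle_of_forall_ne_apply_eq (hU : U.Finite) (hσ : σ.IsCycleOn U) (ha : a ∈ U)
    (hf : ∀ x ∈ U, x ≠ a → f x = σ x) (hb : f b = σ a) (hy : y ∈ U) : f.SameCycle b y := by
  have hpow (n : ℕ) : f.SameCycle b ((σ ^ n) (σ a)) := by
    induction n with
    | zero => rw [pow_zero, Equiv.Perm.one_apply, ← hb, Equiv.Perm.sameCycle_apply_right]
    | succ n ih =>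
      rw [pow_succ', Equiv.Perm.mul_apply]
      obtain hn | hn := eq_or_ne ((σ ^ n) (σ a)) a
      · rw [hn, ← hb, Equiv.Perm.sameCycle_apply_right]
      · rw [← hf _ ((hσ.1.perm_pow n).mapsTo (hσ.1.mapsTo ha)) hn]
        exact ih.apply_right
  obtain ⟨n, rfl⟩ := hσ.exists_pow_eq' hU (hσ.1.mapsTo ha) hy
  exact hpow n

lemma subset_pair_of_isCycleOn_of_apply_apply_eq (hσ : σ.IsCycleOn U) (ha : a ∈ U)
    (h : σ (σ a) = a) : U ⊆ {a, σ a} := by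
  intro y hy
  obtain ⟨n, rfl⟩ := hσ.2 ha hy
  have hfixed (k : ℤ) : (σ ^ (2 * k)) a = a := by
    rw [zpow_mul]
    exact Function.IsFixedPt.perm_zpow (e := σ ^ (2 : ℤ)) h k
  obtain ⟨k, rfl | rfl⟩ := n.even_or_odd'
  · exact Or.inl (hfixed k)
  · right
    rw [add_comm, zpow_add, zpow_one, Equiv.Perm.mul_apply, hfixed, Set.mem_singleton_iff]

end CyclicPermutations

section Forests

variable {V : Type*} {Γ : SimpleGraph V}

lemma exists_subsingleton_neighborSet [Finite V] [Nonempty V] (hΓ : Γ.IsAcyclic) :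
    ∃ v, (Γ.neighborSet v).Subsingleton := by
  classical
  obtain ⟨a⟩ := ‹Nonempty V›
  let c := Γ.connectedComponentMk a
  have hclosed {v w : V} (hv : v ∈ c.supp) (hvw : Γ.Adj v w) : w ∈ c.supp :=
    (c.mem_supp_congr_adj hvw).mp hv
  rcases subsingleton_or_nontrivial c.supp with hc | hc
  · refine ⟨a, fun v hv _ _ => absurd (congrArg Subtype.val (hc.elim ⟨a, rfl⟩ ⟨v, ?_⟩)) hv.ne⟩
    exact hclosed rfl hv
  · have := Fintype.ofFinite c.supp
    obtain ⟨v, hv⟩ := (hΓ.isTree_connectedComponent c).exists_vert_degree_one_of_nontrivial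
    obtain ⟨w, -, hw⟩ := SimpleGraph.degree_eq_one_iff_existsUnique_adj.mp hv
    have hmem {x : V} (hx : Γ.Adj v x) : x = w :=
      congrArg Subtype.val (hw ⟨x, hclosed v.2 hx⟩ hx)
    exact ⟨v, fun x hx y hy => (hmem hx).trans (hmem hy).symm⟩

lemma exists_subsingleton_neighborSet_inter (hΓ : Γ.IsAcyclic) {J : Set V} (hJ : J.Finite)
    (hne : J.Nonempty) : ∃ v ∈ J, (Γ.neighborSet v ∩ J).Subsingleton := by
  have := hJ.to_subtype
  have := hne.to_subtype
  obtain ⟨v, hv⟩ := exists_subsingleton_neighborSet (hΓ.induce J)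
  exact ⟨v, v.2, fun x hx y hy =>
    congrArg Subtype.val (@hv ⟨x, hx.2⟩ hx.1 ⟨y, hy.2⟩ hy.1)⟩

lemma isAcyclic_of_forall_exists_potential {A : Type*} [AddCommGroup A] [Nontrivial A]
    (hΓ : ∀ c : V → V → A, (∀ i j, c j i = -c i j) →
      ∃ h : V → A, ∀ i j, Γ.Adj i j → c i j = h j - h i) : Γ.IsAcyclic := by
  classical
  rw [SimpleGraph.isAcyclic_iff_forall_adj_isBridge]
  intro u v huv
  rw [SimpleGraph.isBridge_iff]
  rintro ⟨p⟩
  obtain ⟨r, hr⟩ := exists_ne (0 : A)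
  obtain ⟨h, hh⟩ := hΓ
    (fun i j => if i = u ∧ j = v then r else if i = v ∧ j = u then -r else 0)
    (fun i j => by have := huv.ne; grind)
  have hconst {x y : V} (q : (Γ.deleteEdges {s(u, v)}).Walk x y) : h x = h y := by
    induction q with
    | nil => rfl
    | cons hadj _ ih =>
      rw [SimpleGraph.deleteEdges_adj, Set.mem_singleton_iff, Sym2.eq_iff] at hadj
      have := hh _ _ hadj.1
      grind
  have hrh : r = h v - h u := by simpa using hh u v huv
  exact hr (by rw [hrh, hconst p, sub_self])

end Forests

section CayleyCircuits

open scoped Pointwise RightActions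

variable {G : Type*} [Group G] {S T U V : Set G} {σ τ : Equiv.Perm G} {a b s t w : G}

/-- A Hamilton circuit on the set `U` of vertices of the Cayley graph of `G` with respect to `S`,
encoded as the permutation `σ` of `G` that sends each vertex of `U` to its successor and fixes all
other elements. -/
structure IsCayleyCircuit (S U : Set G) (σ : Equiv.Perm G) : Prop where
  isCycleOn : σ.IsCycleOn U
  apply_eq_self : ∀ x ∉ U, σ x = x
  apply_mul_inv_mem : ∀ x ∈ U, σ x * x⁻¹ ∈ S

namespace IsCayleyCircuit

lemma mono (hST : S ⊆ T) (hσ : IsCayleyCircuit S U σ) : IsCayleyCircuit T U σ :=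
  ⟨hσ.isCycleOn, hσ.apply_eq_self, fun x hx => hST (hσ.apply_mul_inv_mem x hx)⟩

lemma apply_mem (hσ : IsCayleyCircuit S U σ) (ha : a ∈ U) : σ a ∈ U :=
  hσ.isCycleOn.1.mapsTo ha

lemma inv_apply_mem (hσ : IsCayleyCircuit S U σ) (ha : a ∈ U) : σ⁻¹ a ∈ U :=
  hσ.isCycleOn.inv.1.mapsTo ha

lemma exists_apply_eq (hσ : IsCayleyCircuit S U σ) (ha : a ∈ U) : ∃ t ∈ S, σ a = t * a :=
  ⟨_, hσ.apply_mul_inv_mem a ha, (inv_mul_cancel_right _ _).symm⟩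

lemma inv (hS : ∀ t ∈ S, t⁻¹ = t) (hσ : IsCayleyCircuit S U σ) : IsCayleyCircuit S U σ⁻¹ where
  isCycleOn := hσ.isCycleOn.inv
  apply_eq_self x hx := by rw [Equiv.Perm.inv_eq_iff_eq, hσ.apply_eq_self x hx]
  apply_mul_inv_mem x hx := by
    have hmem : x * (σ⁻¹ x)⁻¹ ∈ S := by
      simpa using hσ.apply_mul_inv_mem _ (hσ.inv_apply_mem hx)
    have hinv := hS _ hmem
    rw [mul_inv_rev, inv_inv] at hinv
    rwa [hinv]

lemma exists_rightCoset (hσ : IsCayleyCircuit S U σ) (g : G) :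
    ∃ τ, IsCayleyCircuit S (U <• g) τ ∧ ∀ x, τ (x * g) = σ x * g := by
  refine ⟨Equiv.mulRight g * σ * (Equiv.mulRight g)⁻¹,
    ⟨hσ.isCycleOn.conj (g := Equiv.mulRight g), fun x hx => ?_, fun x hx => ?_⟩, by simp⟩
  · rw [mem_rightCoset_iff] at hx
    simp [hσ.apply_eq_self _ hx]
  · rw [mem_rightCoset_iff] at hx
    simpa [mul_assoc] using hσ.apply_mul_inv_mem _ hx

/-- Two disjoint circuits are spliced by replacing the edges `a → σ a` and `b → τ b` with
`a → τ b` and `b → σ a`. -/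
lemma union (hσ : IsCayleyCircuit S U σ) (hτ : IsCayleyCircuit S V τ) (hU : U.Finite)
    (hV : V.Finite) (hUV : Disjoint U V) (ha : a ∈ U) (hb : b ∈ V) (hab : τ b * a⁻¹ ∈ S)
    (hba : σ a * b⁻¹ ∈ S) : ∃ ρ, IsCayleyCircuit S (U ∪ V) ρ := by
  classical
  set ρ := σ * τ * Equiv.swap a b with hρ
  have hne : a ≠ b := fun h => hUV.ne_of_mem ha hb h
  have hρU : ∀ x ∈ U, x ≠ a → ρ x = σ x := fun x hx hxa => by
    have hxV := hUV.notMem_of_mem_left hx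
    simp [hρ, Equiv.swap_apply_of_ne_of_ne hxa (ne_of_mem_of_not_mem hb hxV).symm,
      hτ.apply_eq_self x hxV]
  have hρV : ∀ x ∈ V, x ≠ b → ρ x = τ x := fun x hx hxb => by
    have hxa := (ne_of_mem_of_not_mem ha (hUV.notMem_of_mem_right hx)).symm
    simp [hρ, Equiv.swap_apply_of_ne_of_ne hxa hxb,
      hσ.apply_eq_self _ (hUV.notMem_of_mem_right (hτ.apply_mem hx))]
  have hρa : ρ a = τ b := by
    simp [hρ, hσ.apply_eq_self _ (hUV.notMem_of_mem_right (hτ.apply_mem hb))]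
  have hρb : ρ b = σ a := by
    simp [hρ, hτ.apply_eq_self _ (hUV.notMem_of_mem_left ha)]
  have hcycleU : ∀ y ∈ U, ρ.SameCycle b y := fun y hy =>
    sameCycle_of_forall_ne_apply_eq hU hσ.isCycleOn ha hρU hρb hy
  have hcycleV : ∀ y ∈ V, ρ.SameCycle a y := fun y hy =>
    sameCycle_of_forall_ne_apply_eq hV hτ.isCycleOn hb hρV hρa hy
  have hfix : ∀ x ∉ U ∪ V, ρ x = x := fun x hx => by
    rw [Set.mem_union, not_or] at hx
    simp [hρ, Equiv.swap_apply_of_ne_of_ne (ne_of_mem_of_not_mem ha hx.1).symm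
      (ne_of_mem_of_not_mem hb hx.2).symm, hσ.apply_eq_self x hx.1, hτ.apply_eq_self x hx.2]
  refine ⟨ρ, isCycleOn_of_forall_sameCycle hfix fun y hy =>
    hy.elim (fun hy => (hcycleV b hb).trans (hcycleU y hy)) (hcycleV y), hfix, ?_⟩
  rintro x (hx | hx)
  · obtain rfl | hxa := eq_or_ne x a
    · rwa [hρa]
    · rw [hρU x hx hxa]
      exact hσ.apply_mul_inv_mem x hx
  · obtain rfl | hxb := eq_or_ne x b
    · rwa [hρb]
    · rw [hρV x hx hxb]
      exact hτ.apply_mul_inv_mem x hx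

lemma exists_apply_eq_mul [Finite G]
    (hσ : IsCayleyCircuit S (Subgroup.closure S : Set G) σ) (ht : t ∈ S)
    (hind : t ∉ Subgroup.closure (S \ {t})) : ∃ x ∈ Subgroup.closure S, σ x = t * x := by
  by_contra! hne
  have hpow (n : ℕ) : (σ ^ n) 1 ∈ Subgroup.closure (S \ {t}) := by
    induction n with
    | zero => exact one_mem _
    | succ n ih =>
      have hmem := Subgroup.closure_mono Set.sdiff_subset ih
      obtain ⟨u, hu, hun⟩ := hσ.exists_apply_eq hmem
      have hut : u ≠ t := by
        rintro rfl
        exact hne _ hmem hun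
      rw [pow_succ', Equiv.Perm.mul_apply, hun]
      exact mul_mem (Subgroup.subset_closure ⟨hu, hut⟩) ih
  obtain ⟨n, rfl⟩ := hσ.isCycleOn.exists_pow_eq' (Set.toFinite _)
    (one_mem (Subgroup.closure S)) (Subgroup.subset_closure ht)
  exact hind (hpow n)

lemma exists_rightCoset_apply_mul_eq [Finite G]
    (hσ : IsCayleyCircuit S (Subgroup.closure S : Set G) σ) (ht : t ∈ S) (htinv : t⁻¹ = t)
    (hind : t ∉ Subgroup.closure (S \ {t})) (y : G) :
    ∃ τ, IsCayleyCircuit S ((Subgroup.closure S : Set G) <• y) τ ∧ τ (t * y) = y := by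
  obtain ⟨x, hx, hxt⟩ := hσ.exists_apply_eq_mul ht hind
  have hcoset : (Subgroup.closure S : Set G) <• (x⁻¹ * t * y) =
      (Subgroup.closure S : Set G) <• y := by
    rw [← rightCoset_assoc, rightCoset_mem_rightCoset _
      (mul_mem (inv_mem hx) (Subgroup.subset_closure ht))]
  obtain ⟨τ, hτ, hτσ⟩ := hσ.exists_rightCoset (x⁻¹ * t * y)
  refine ⟨τ, hcoset ▸ hτ, ?_⟩
  calc τ (t * y) = τ (x * (x⁻¹ * t * y)) := by rw [mul_assoc x⁻¹, mul_inv_cancel_left]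
    _ = t * x * (x⁻¹ * t * y) := by rw [hτσ, hxt]
    _ = t * (t * y) := by group
    _ = y := by rw [← mul_assoc, inv_eq_iff_mul_eq_one.mp htinv, one_mul]

/-- Both neighbours of `w` on the circuit arise from `w` by multiplication with elements of `S`, and
at most one of these does not commute with `s`. -/
lemma exists_apply_eq_mul_of_commute (hS : ∀ t ∈ insert s S, t⁻¹ = t)
    (hcomm : ∀ t ∈ S, ∀ u ∈ S, t ≠ u → Commute s t ∨ Commute s u)
    (hσ : IsCayleyCircuit (insert s S) U σ) (hw : w ∈ U) (hsw : s * w ∉ U)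
    (hU : ¬U ⊆ {w, σ w}) :
    ∃ t ∈ S, Commute s t ∧ ∃ ρ, IsCayleyCircuit (insert s S) U ρ ∧ ρ w = t * w := by
  have hneighbour {π : Equiv.Perm G} (hπ : IsCayleyCircuit (insert s S) U π) :
      ∃ t ∈ S, π w = t * w := by
    obtain ⟨t, rfl | ht, htw⟩ := hπ.exists_apply_eq hw
    · exact absurd (htw ▸ hπ.apply_mem hw) hsw
    · exact ⟨t, ht, htw⟩
  obtain ⟨t, ht, htw⟩ := hneighbour hσ
  obtain ⟨u, hu, huw⟩ := hneighbour (hσ.inv hS)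
  have htu : t ≠ u := by
    rintro rfl
    exact hU (subset_pair_of_isCycleOn_of_apply_apply_eq hσ.isCycleOn hw
      (by rw [htw, ← huw, Equiv.Perm.inv_def, Equiv.apply_symm_apply]))
  rcases hcomm t ht u hu htu with hst | hsu
  · exact ⟨t, ht, hst, σ, hσ, htw⟩
  · exact ⟨u, hu, hsu, σ⁻¹, hσ.inv hS, huw⟩

end IsCayleyCircuit

lemma closure_insert_induction_rightCoset [Finite G] {P : Set G → Prop} (hs : s⁻¹ = s)
    (base : P (Subgroup.closure S))
    (union : ∀ U, ∀ w ∈ U, (∀ h ∈ Subgroup.closure S, ∀ x ∈ U, h * x ∈ U) → s * w ∉ U → P U →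
      P (U ∪ (Subgroup.closure S : Set G) <• (s * w))) :
    P (Subgroup.closure (insert s S)) := by
  have hle : Subgroup.closure S ≤ Subgroup.closure (insert s S) :=
    Subgroup.closure_mono (Set.subset_insert s S)
  obtain ⟨U, hSU, ⟨hUle, hUinv, hPU⟩, hmax⟩ := (Set.toFinite {U : Set G |
    U ⊆ Subgroup.closure (insert s S) ∧ (∀ h ∈ Subgroup.closure S, ∀ x ∈ U, h * x ∈ U) ∧
      P U}).exists_le_maximal (a := (Subgroup.closure S : Set G))
        ⟨hle, fun h hh x hx => mul_mem hh hx, base⟩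
  have hsU : ∀ w ∈ U, s * w ∈ U := by
    intro w hw
    by_contra hsw
    have hsw_mem := mul_mem (Subgroup.subset_closure (Set.mem_insert s S)) (hUle hw)
    refine hsw (hmax ⟨Set.union_subset hUle fun x hx => ?_, fun h hh x hx => hx.imp
      (hUinv h hh x) fun hx => ?_, union U w hw hUinv hsw hPU⟩ Set.subset_union_left
      (Or.inr (mem_own_rightCoset (Subgroup.closure S).toSubmonoid (s * w))))
    · rw [mem_rightCoset_iff] at hx
      rw [← inv_mul_cancel_right x (s * w)]
      exact mul_mem (hle hx) hsw_mem
    · rw [mem_rightCoset_iff] at hx ⊢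
      rw [mul_assoc]
      exact mul_mem hh hx
  have hsubset : (Subgroup.closure (insert s S) : Set G) ⊆ U := by
    intro g hg
    induction hg using Subgroup.closure_induction_left with
    | one => exact hSU (one_mem _)
    | mul_left t ht y _ hy =>
      obtain rfl | ht := ht
      · exact hsU y hy
      · exact hUinv t (Subgroup.subset_closure ht) y hy
    | inv_mul_cancel t ht y _ hy =>
      obtain rfl | ht := ht
      · rw [hs]
        exact hsU y hy
      · exact hUinv _ (inv_mem (Subgroup.subset_closure ht)) y hy
  rwa [hsubset.antisymm hUle]

lemma not_subset_pair_of_forall_mul_mem (hS : S.Nontrivial) (hS1 : 1 ∉ S)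
    (hw : ∀ t ∈ S, t * w ∈ U) (x : G) : ¬U ⊆ {w, x} := by
  intro hU
  have hmul : ∀ t ∈ S, t * w = x := fun t ht =>
    (hU (hw t ht)).resolve_left fun h => hS1 (mul_eq_right.mp h ▸ ht)
  obtain ⟨t, ht, u, hu, htu⟩ := hS
  exact htu (mul_right_cancel ((hmul t ht).trans (hmul u hu).symm))

namespace IsCayleyCircuit

/-- The circuit on `U` is spliced with one on the right coset of `s * w`. The edges `w → t * w` and
`t * s * w → s * w` to be replaced are opposite sides of a square because `t` commutes with `s`. -/
lemma exists_union_rightCoset [Finite G] (hS : ∀ t ∈ insert s S, t⁻¹ = t)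
    (hind : ∀ t ∈ S, t ∉ Subgroup.closure (S \ {t})) (hnontrivial : S.Nontrivial)
    (hcomm : ∀ t ∈ S, ∀ u ∈ S, t ≠ u → Commute s t ∨ Commute s u)
    (hτ : IsCayleyCircuit S (Subgroup.closure S : Set G) τ)
    (hU : ∀ h ∈ Subgroup.closure S, ∀ x ∈ U, h * x ∈ U) (hw : w ∈ U) (hsw : s * w ∉ U)
    (hσ : IsCayleyCircuit (insert s S) U σ) :
    ∃ ρ, IsCayleyCircuit (insert s S) (U ∪ (Subgroup.closure S : Set G) <• (s * w)) ρ := by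
  have hS1 : 1 ∉ S := fun h => hind 1 h (one_mem _)
  obtain ⟨t, ht, hst, σ', hσ', hσ'w⟩ := hσ.exists_apply_eq_mul_of_commute hS hcomm hw hsw
    (not_subset_pair_of_forall_mul_mem hnontrivial hS1
      (fun t ht => hU t (Subgroup.subset_closure ht) w hw) (σ w))
  obtain ⟨τ', hτ', hτ't⟩ :=
    hτ.exists_rightCoset_apply_mul_eq ht (hS t (Or.inr ht)) (hind t ht) (s * w)
  have hdisjoint : Disjoint U ((Subgroup.closure S : Set G) <• (s * w)) := by
    refine Set.disjoint_left.mpr fun x hxU hx => hsw ?_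
    rw [mem_rightCoset_iff] at hx
    simpa using hU _ (inv_mem hx) x hxU
  have htsw : t * (s * w) ∈ (Subgroup.closure S : Set G) <• (s * w) :=
    mem_rightCoset (s * w) (Subgroup.subset_closure ht)
  refine hσ'.union (hτ'.mono (Set.subset_insert s S)) (Set.toFinite _) (Set.toFinite _) hdisjoint
    hw htsw ?_ ?_
  · rw [hτ't, mul_inv_cancel_right]
    exact Set.mem_insert s S
  · have hsquare : t * (s * w) = s * (t * w) := by rw [← mul_assoc, ← hst.eq, mul_assoc]
    rw [hσ'w, hsquare, mul_inv_rev, mul_inv_cancel_left, hS s (Set.mem_insert s S)]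
    exact Set.mem_insert s S

lemma exists_closure_insert [Finite G] (hS : ∀ t ∈ insert s S, t⁻¹ = t)
    (hind : ∀ t ∈ S, t ∉ Subgroup.closure (S \ {t})) (hnontrivial : S.Nontrivial)
    (hcomm : ∀ t ∈ S, ∀ u ∈ S, t ≠ u → Commute s t ∨ Commute s u)
    (hσ : IsCayleyCircuit S (Subgroup.closure S : Set G) σ) :
    ∃ ρ, IsCayleyCircuit (insert s S) (Subgroup.closure (insert s S) : Set G) ρ :=
  closure_insert_induction_rightCoset (P := fun U => ∃ ρ, IsCayleyCircuit (insert s S) U ρ)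
    (hS s (Set.mem_insert s S)) ⟨σ, hσ.mono (Set.subset_insert s S)⟩
    fun _ _ hw hU hsw ⟨_, hρ⟩ =>
      exists_union_rightCoset hS hind hnontrivial hcomm hσ hU hw hsw hρ

end IsCayleyCircuit

section Dihedral

open scoped Classical in
/-- The permutation of `G` that multiplies the elements of the subgroup `H` by `h ∈ H` from the left
and fixes all other elements. -/
noncomputable def mulLeftOn (H : Subgroup G) (h : H) : Equiv.Perm G :=
  Equiv.Perm.ofSubtype (Equiv.mulLeft h)

variable {H : Subgroup G} {h : H} {x : G}

lemma mulLeftOn_apply_of_mem (hx : x ∈ H) : mulLeftOn H h x = h * x := by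
  classical
  rw [mulLeftOn, Equiv.Perm.ofSubtype_apply_of_mem _ hx]
  rfl

lemma mulLeftOn_apply_of_notMem (hx : x ∉ H) : mulLeftOn H h x = x := by
  classical
  exact Equiv.Perm.ofSubtype_apply_of_not_mem _ hx

lemma notMem_zpowers_mul_of_inv_eq_self (hs : s⁻¹ = s) (ht : t⁻¹ = t) (hs1 : s ≠ 1) (ht1 : t ≠ 1) :
    s ∉ Subgroup.zpowers (t * s) := by
  rintro ⟨n, hn : (t * s) ^ n = s⟩
  have hcomm : Commute s (t * s) := by
    simpa only [hn] using (Commute.refl (t * s)).zpow_left n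
  have hsq : (t * s) ^ (2 : ℤ) = 1 := by
    rw [zpow_two, mul_assoc, hcomm.eq, mul_assoc, inv_eq_iff_mul_eq_one.mp hs, mul_one,
      inv_eq_iff_mul_eq_one.mp ht]
  obtain ⟨k, rfl | rfl⟩ := n.even_or_odd'
  · rw [zpow_mul, hsq, one_zpow] at hn
    exact hs1 hn.symm
  · rw [zpow_add, zpow_mul, hsq, one_zpow, one_mul, zpow_one] at hn
    exact ht1 (mul_eq_right.mp hn)

lemma mem_zpowers_or_mul_mem_zpowers (hs : s⁻¹ = s) (ht : t⁻¹ = t)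
    (hx : x ∈ Subgroup.closure {s, t}) :
    x ∈ Subgroup.zpowers (t * s) ∨ s * x ∈ Subgroup.zpowers (t * s) := by
  have hmem := Subgroup.mem_zpowers (t * s)
  have hmul : ∀ u ∈ ({s, t} : Set G), ∀ y,
      y ∈ Subgroup.zpowers (t * s) ∨ s * y ∈ Subgroup.zpowers (t * s) →
      u * y ∈ Subgroup.zpowers (t * s) ∨ s * (u * y) ∈ Subgroup.zpowers (t * s) := by
    have hss : s * s = 1 := inv_eq_iff_mul_eq_one.mp hs
    have hst : s * t = (t * s)⁻¹ := by rw [mul_inv_rev, hs, ht]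
    rintro u (rfl | rfl) y (hy | hy)
    · rw [← mul_assoc, hss, one_mul]
      exact Or.inr hy
    · exact Or.inl hy
    · rw [← mul_assoc, hst]
      exact Or.inr (mul_mem (inv_mem hmem) hy)
    · have huy : u * y = u * s * (s * y) := by rw [mul_assoc, ← mul_assoc s, hss, one_mul]
      rw [huy]
      exact Or.inl (mul_mem hmem hy)
  induction hx using Subgroup.closure_induction_left with
  | one => exact Or.inl (one_mem _)
  | mul_left u hu y _ hy => exact hmul u hu y hy
  | inv_mul_cancel u hu y _ hy =>
    have huinv : u⁻¹ = u := by rcases hu with rfl | rfl <;> assumption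
    rw [huinv]
    exact hmul u hu y hy

lemma exists_alternating_perm (hs : s⁻¹ = s) (ht : t⁻¹ = t) (hs1 : s ≠ 1) (ht1 : t ≠ 1) :
    ∃ σ : Equiv.Perm G, (∀ x ∈ Subgroup.zpowers (t * s), σ x = s * x) ∧
      (∀ x ∈ Subgroup.closure {s, t}, s * x ∈ Subgroup.zpowers (t * s) → σ x = t * x) ∧
      ∀ x ∉ Subgroup.closure {s, t}, σ x = x := by
  have hsmem : s ∈ Subgroup.closure {s, t} := Subgroup.subset_closure (Or.inl rfl)
  have htmem : t ∈ Subgroup.closure {s, t} := Subgroup.subset_closure (Or.inr rfl)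
  have hle : Subgroup.zpowers (t * s) ≤ Subgroup.closure {s, t} :=
    Subgroup.zpowers_le.mpr (mul_mem htmem hsmem)
  refine ⟨mulLeftOn (Subgroup.zpowers (t * s)) ⟨t * s, Subgroup.mem_zpowers (t * s)⟩ *
    mulLeftOn (Subgroup.closure {s, t}) ⟨s, hsmem⟩, fun x hx => ?_, fun x hx hsx => ?_,
    fun x hx => ?_⟩
  · have hsx : s * x ∉ Subgroup.zpowers (t * s) := fun h =>
      notMem_zpowers_mul_of_inv_eq_self hs ht hs1 ht1 ((Subgroup.mul_mem_cancel_right _ hx).mp h)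
    rw [Equiv.Perm.mul_apply, mulLeftOn_apply_of_mem (hle hx), mulLeftOn_apply_of_notMem hsx]
  · rw [Equiv.Perm.mul_apply, mulLeftOn_apply_of_mem hx, mulLeftOn_apply_of_mem hsx, mul_assoc,
      ← mul_assoc s, inv_eq_iff_mul_eq_one.mp hs, one_mul]
  · rw [Equiv.Perm.mul_apply, mulLeftOn_apply_of_notMem hx,
      mulLeftOn_apply_of_notMem fun h => hx (hle h)]

/-- The circuit alternates between multiplication by `s` and by `t`. -/
lemma exists_isCayleyCircuit_pair (hs : s⁻¹ = s) (ht : t⁻¹ = t) (hs1 : s ≠ 1) (ht1 : t ≠ 1) :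
    ∃ σ, IsCayleyCircuit {s, t} (Subgroup.closure {s, t} : Set G) σ := by
  obtain ⟨σ, hσs, hσt, hfix⟩ := exists_alternating_perm hs ht hs1 ht1
  have hss (x : G) : s * (s * x) = x := by rw [← mul_assoc, inv_eq_iff_mul_eq_one.mp hs, one_mul]
  have hmem {x : G} (hx : x ∈ Subgroup.zpowers (t * s)) : s * x ∈ Subgroup.closure {s, t} := by
    have hle : Subgroup.zpowers (t * s) ≤ Subgroup.closure {s, t} :=
      Subgroup.zpowers_le.mpr (mul_mem (Subgroup.subset_closure (Or.inr rfl))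
        (Subgroup.subset_closure (Or.inl rfl)))
    exact mul_mem (Subgroup.subset_closure (Or.inl rfl)) (hle hx)
  have hstep : ∀ x ∈ Subgroup.zpowers (t * s), σ.SameCycle 1 (t * s * x) ↔ σ.SameCycle 1 x :=
    fun x hx => by
    rw [mul_assoc, ← hσt (s * x) (hmem hx) ((hss x).symm ▸ hx), ← hσs x hx,
      Equiv.Perm.sameCycle_apply_right, Equiv.Perm.sameCycle_apply_right]
  have hcycle (n : ℤ) : σ.SameCycle 1 ((t * s) ^ n) := by
    induction n with
    | zero => rw [zpow_zero]
    | succ n ih =>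
      simpa only [← zpow_one_add, add_comm] using
        (hstep _ (Subgroup.zpow_mem_zpowers _ _)).mpr ih
    | pred n ih =>
      refine (hstep _ (Subgroup.zpow_mem_zpowers _ _)).mp ?_
      simpa only [← zpow_one_add, add_sub_cancel] using ih
  refine ⟨σ, isCycleOn_of_forall_sameCycle (a := 1) hfix fun x hx => ?_, hfix, fun x hx => ?_⟩
  · rcases mem_zpowers_or_mul_mem_zpowers hs ht hx with ⟨n, rfl⟩ | ⟨n, hn : (t * s) ^ n = s * x⟩
    · exact hcycle n
    · rw [← hss x, ← hn, ← hσs _ (Subgroup.zpow_mem_zpowers _ n),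
        Equiv.Perm.sameCycle_apply_right]
      exact hcycle n
  · rcases mem_zpowers_or_mul_mem_zpowers hs ht hx with hxC | hsx
    · rw [hσs x hxC, mul_inv_cancel_right]
      exact Or.inl rfl
    · rw [hσt x hx hsx, mul_inv_cancel_right]
      exact Or.inr rfl

end Dihedral

lemma IsCayleyCircuit.exists_isHamiltonianCircuitMap [Finite G]
    (hσ : IsCayleyCircuit S Set.univ σ) : ∃ θ, IsHamiltonianCircuitMap S θ := by
  have : Fintype G := Fintype.ofFinite G
  have hcycle : σ.IsCycleOn (Finset.univ : Finset G) := by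
    rw [Finset.coe_univ]
    exact hσ.isCycleOn
  have hpow (m n : ℕ) : (σ ^ m) 1 = (σ ^ n) 1 ↔ (m : ZMod (Nat.card G)) = n := by
    rw [hcycle.pow_apply_eq_pow_apply (Finset.mem_univ 1), Finset.card_univ,
      ← Nat.card_eq_fintype_card, ZMod.natCast_eq_natCast_iff]
  have hθ (n : ℕ) : (σ ^ (n : ZMod (Nat.card G)).val) 1 = (σ ^ n) 1 := by
    rw [hpow, ZMod.natCast_zmod_val]
  refine ⟨fun t => (σ ^ t.val) 1, ⟨fun t u htu => ?_, fun x => ?_⟩, fun t => ?_⟩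
  · simpa only [hpow, ZMod.natCast_zmod_val] using htu
  · obtain ⟨n, -, rfl⟩ := hcycle.exists_pow_eq (Finset.mem_univ 1) (Finset.mem_univ x)
    exact ⟨n, hθ n⟩
  · obtain ⟨n, rfl⟩ := ZMod.natCast_zmod_surjective t
    beta_reduce
    rw [← Nat.cast_succ, hθ, hθ, pow_succ', Equiv.Perm.mul_apply]
    exact hσ.apply_mul_inv_mem _ (Set.mem_univ _)

lemma exists_isCayleyCircuit_of_isAcyclic [Finite G] {ι : Type*} {s : ι → G}
    {Γ : SimpleGraph ι} (hΓ : Γ.IsAcyclic) (hinv : ∀ i, (s i)⁻¹ = s i)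
    (hind : ∀ i, ∀ J : Set ι, i ∉ J → s i ∉ Subgroup.closure (s '' J))
    (hcomm : ∀ i j, ¬Γ.Adj i j → Commute (s i) (s j)) (J : Finset ι) (hJ : J.Nonempty) :
    ∃ σ, IsCayleyCircuit (s '' J) (Subgroup.closure (s '' J) : Set G) σ := by
  classical
  have hs1 (i : ι) : s i ≠ 1 := fun h => hind i ∅ (Set.notMem_empty i) (h ▸ one_mem _)
  have hinj : Function.Injective s := fun i j hij => by
    by_contra hne
    exact hind i {j} hne (hij ▸ Subgroup.subset_closure (Set.mem_image_of_mem s rfl))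
  induction J using Finset.strongInduction with
  | H J ih =>
    obtain ⟨i, hi, hleaf⟩ := exists_subsingleton_neighborSet_inter hΓ J.finite_toSet hJ
    obtain ⟨K, hiK, rfl⟩ : ∃ K, i ∉ K ∧ insert i K = J :=
      ⟨J.erase i, J.notMem_erase i, Finset.insert_erase hi⟩
    rw [Finset.coe_insert, Set.image_insert_eq]
    rcases K.eq_empty_or_nonempty with rfl | hK
    · simpa using exists_isCayleyCircuit_pair (hinv i) (hinv i) (hs1 i) (hs1 i)
    rcases hK.exists_eq_singleton_or_nontrivial with ⟨j, rfl⟩ | hK'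
    · simpa using exists_isCayleyCircuit_pair (hinv i) (hinv j) (hs1 i) (hs1 j)
    obtain ⟨σ, hσ⟩ := ih K (Finset.ssubset_insert hiK) hK
    refine hσ.exists_closure_insert ?_ ?_ (Set.Nontrivial.image hK' hinj) ?_
    · rintro _ (rfl | ⟨j, -, rfl⟩)
      exacts [hinv i, hinv j]
    · rintro _ ⟨j, -, rfl⟩ hj
      refine hind j (K \ {j}) (fun h => h.2 rfl) (Subgroup.closure_mono ?_ hj)
      rw [Set.image_sdiff hinj, Set.image_singleton]
    · rintro _ ⟨j, hj, rfl⟩ _ ⟨k, hk, rfl⟩ hjk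
      by_contra! hnot
      have hadj {l : ι} (hl : ¬Commute (s i) (s l)) : Γ.Adj i l :=
        not_imp_comm.mp (hcomm i l) hl
      exact hjk (congrArg s (hleaf ⟨hadj hnot.1, Finset.mem_insert_of_mem hj⟩
        ⟨hadj hnot.2, Finset.mem_insert_of_mem hk⟩))

end CayleyCircuits

section Reflections

open Polynomial.Chebyshev Real

lemma eval_chebyshevS_sub_one_eq_zero {q : ℤ} {θ : ℝ} (hθ : sin θ ≠ 0) (hq : q * θ = π) :
    (S ℝ (q - 1)).eval (2 * cos θ) = 0 := by
  refine (mul_eq_zero_iff_right hθ).mp ?_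
  rw [S_two_mul_real_cos]
  push_cast
  rw [sub_add_cancel, hq, sin_pi]

lemma eval_chebyshevS_add_eval_sub_one_eq_zero {q : ℤ} {θ : ℝ} (hθ : sin θ ≠ 0)
    (hq : (2 * q + 1) * θ = 2 * π) :
    (S ℝ q).eval (2 * cos θ) + (S ℝ (q - 1)).eval (2 * cos θ) = 0 := by
  refine (mul_eq_zero_iff_right hθ).mp ?_
  rw [add_mul, S_two_mul_real_cos, S_two_mul_real_cos,
    show (q + 1 : ℝ) * θ = 2 * π - q * θ by linear_combination hq, sin_two_pi_sub]
  push_cast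
  rw [sub_add_cancel, neg_add_cancel]

lemma sin_two_mul_pi_div_ne_zero {m : ℕ} (hm : 3 ≤ m) : sin (2 * π / m) ≠ 0 := by
  have hm' : (3 : ℝ) ≤ m := by exact_mod_cast hm
  refine (sin_pos_of_pos_of_lt_pi (by positivity) ?_).ne'
  rw [div_lt_iff₀ (by positivity)]
  nlinarith [pi_pos]

lemma reflection_mul_reflection_pow_eq_one {V : Type*} [AddCommGroup V] [Module ℝ V] {x y : V}
    {f g : Module.Dual ℝ V} (hf : f x = 2) (hg : g y = 2) {m : ℕ} (hm : 3 ≤ m)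
    (hfg : f y * g x = 4 * cos (π / m) ^ 2) :
    (Module.reflection hf * Module.reflection hg) ^ m = 1 := by
  have hcos : 2 * cos (2 * π / m) = f y * g x - 2 := by
    rw [hfg, mul_div_assoc, cos_two_mul]
    ring
  have hm0 : (m : ℝ) ≠ 0 := by positivity
  have hsin := sin_two_mul_pi_div_ne_zero hm
  ext z
  rw [Module.reflection_mul_reflection_pow_apply hf hg m z _ hcos]
  rcases Nat.even_or_odd' m with ⟨q, hq | hq⟩
  · have hS := eval_chebyshevS_sub_one_eq_zero (q := q) hsin (by
      field_simp
      rw [hq]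
      push_cast
      ring)
    rw [show ((m : ℤ) - 2) / 2 = q - 1 by omega, show ((m : ℤ) - 1) / 2 = q - 1 by omega, hS]
    simp
  · have hS := eval_chebyshevS_add_eval_sub_one_eq_zero (q := q) hsin (by
      field_simp
      rw [hq]
      push_cast
      ring)
    rw [show ((m : ℤ) - 2) / 2 = q - 1 by omega, show ((m : ℤ) - 1) / 2 = q by omega,
      show ((m : ℤ) - 3) / 2 = q - 1 by omega, show (m : ℤ) / 2 = q by omega, hS]
    simp

lemma reflection_mul_reflection_sq_eq_one {R V : Type*} [CommRing R] [AddCommGroup V] [Module R V]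
    {x y : V} {f g : Module.Dual R V} (hf : f x = 2) (hg : g y = 2) (hfy : f y = 0)
    (hgx : g x = 0) : (Module.reflection hf * Module.reflection hg) ^ 2 = 1 := by
  ext z
  simp only [pow_two, LinearEquiv.mul_apply, Module.reflection_apply, map_sub, map_smul, hf, hg,
    hfy, hgx, LinearEquiv.coe_one, id_eq]
  module

end Reflections

section Realizations

open Real

variable {B : Type*} {M : CoxeterMatrix B} {V : Type*} [AddCommGroup V] [Module ℝ V] {W : Type*}
  [Group W]

/-- A real realization of a Coxeter matrix `M`: simple roots and coroots whose pairings satisfy the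
relations under which the reflections `v ↦ v - coroot i v • root i` represent the Coxeter group
of `M`. The pairing matrix need not be symmetric. -/
structure CoxeterRealization (M : CoxeterMatrix B) (V : Type*) [AddCommGroup V]
    [Module ℝ V] where
  root : B → V
  coroot : B → Module.Dual ℝ V
  coroot_root_self : ∀ i, coroot i (root i) = 2
  coroot_root_mul_coroot_root : ∀ i j, M i j ≠ 0 →
    coroot i (root j) * coroot j (root i) = 4 * cos (π / M i j) ^ 2
  coroot_root_eq_zero : ∀ i j, M i j = 2 → coroot i (root j) = 0

namespace CoxeterRealization

lemma isLiftable_reflection (R : CoxeterRealization M V) :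
    M.IsLiftable fun i => Module.reflection (R.coroot_root_self i) := by
  intro i j
  obtain rfl | hij := eq_or_ne i j
  · rw [M.diagonal, pow_one]
    ext v
    exact Module.involutive_reflection (R.coroot_root_self i) v
  rcases Nat.eq_zero_or_pos (M i j) with h0 | hpos
  · rw [h0, pow_zero]
  obtain h2 | h2 := eq_or_ne (M i j) 2
  · rw [h2]
    exact reflection_mul_reflection_sq_eq_one _ _ (R.coroot_root_eq_zero i j h2)
      (R.coroot_root_eq_zero j i (M.symmetric j i ▸ h2))
  · have h1 := M.off_diagonal i j hij
    exact reflection_mul_reflection_pow_eq_one _ _ (by omega)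
      (R.coroot_root_mul_coroot_root i j hpos.ne')

/-- The representation of the Coxeter group in which `cs.simple i` acts as the reflection
`v ↦ v - coroot i v • root i`. -/
noncomputable def rep (R : CoxeterRealization M V) (cs : CoxeterSystem M W) : W →* (V ≃ₗ[ℝ] V) :=
  cs.lift ⟨_, R.isLiftable_reflection⟩

lemma rep_simple_apply (R : CoxeterRealization M V) (cs : CoxeterSystem M W) (i : B) (v : V) :
    R.rep cs (cs.simple i) v = v - R.coroot i v • R.root i := by
  rw [rep, cs.lift_apply_simple, Module.reflection_apply]

/-- The realization with simple roots `b i` and pairings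
`coroot i (root j) = -2 * cos (π / M i j) * exp (c i j)`. For `M i j = 0`, which stands for infinite
order, the convention `π / 0 = 0` gives the right value `cos 0 = 1`. -/
noncomputable def ofBasis (b : Module.Basis B ℝ V) (c : B → B → ℝ) (hc : ∀ i j, c j i = -c i j) :
    CoxeterRealization M V where
  root := b
  coroot i := b.constr ℝ fun j => -2 * cos (π / M i j) * exp (c i j)
  coroot_root_self i := by
    have hcii : c i i = 0 := self_eq_neg.mp (hc i i)
    simp [hcii]
  coroot_root_mul_coroot_root i j _ := by
    have hexp : exp (c i j) * exp (-c i j) = 1 := by rw [← exp_add, add_neg_cancel, exp_zero]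
    rw [b.constr_basis, b.constr_basis, M.symmetric j i, hc i j]
    linear_combination 4 * cos (π / M i j) ^ 2 * hexp
  coroot_root_eq_zero i j h := by
    rw [b.constr_basis, h, Nat.cast_ofNat, cos_pi_div_two, mul_zero, zero_mul]

@[simp]
lemma coroot_root_ofBasis (b : Module.Basis B ℝ V) {c : B → B → ℝ} (hc : ∀ i j, c j i = -c i j)
    (i j : B) : ((ofBasis b c hc : CoxeterRealization M V).coroot i)
      ((ofBasis b c hc : CoxeterRealization M V).root j) =
      -2 * cos (π / M i j) * exp (c i j) :=
  b.constr_basis ℝ _ j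

lemma rep_apply_sub_mem_span (R : CoxeterRealization M V) (cs : CoxeterSystem M W) {J : Set B}
    {w : W} (hw : w ∈ Subgroup.closure (cs.simple '' J)) (v : V) :
    R.rep cs w v - v ∈ Submodule.span ℝ (R.root '' J) := by
  have hsimple (i : B) (hi : i ∈ J) (y : W)
      (hy : R.rep cs y v - v ∈ Submodule.span ℝ (R.root '' J)) :
      R.rep cs (cs.simple i * y) v - v ∈ Submodule.span ℝ (R.root '' J) := by
    rw [map_mul, LinearEquiv.mul_apply, rep_simple_apply, sub_right_comm]
    exact sub_mem hy (Submodule.smul_mem _ _ (Submodule.subset_span (Set.mem_image_of_mem _ hi)))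
  induction hw using Subgroup.closure_induction_left with
  | one => simp
  | mul_left u hu y _ hy =>
    obtain ⟨i, hi, rfl⟩ := hu
    exact hsimple i hi y hy
  | inv_mul_cancel u hu y _ hy =>
    obtain ⟨i, hi, rfl⟩ := hu
    rw [cs.inv_simple]
    exact hsimple i hi y hy

lemma simple_notMem_closure_of_linearIndependent (R : CoxeterRealization M V)
    (cs : CoxeterSystem M W) (hR : LinearIndependent ℝ R.root) {i : B} {J : Set B} (hi : i ∉ J) :
    cs.simple i ∉ Subgroup.closure (cs.simple '' J) := by
  intro hmem
  have hspan := R.rep_apply_sub_mem_span cs hmem (R.root i)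
  rw [rep_simple_apply, R.coroot_root_self, sub_sub_cancel_left, neg_mem_iff,
    Submodule.smul_mem_iff _ two_ne_zero] at hspan
  exact hR.notMem_span_image hi hspan

end CoxeterRealization

lemma simple_notMem_closure_image_simple (cs : CoxeterSystem M W) {i : B} {J : Set B} (hi : i ∉ J) :
    cs.simple i ∉ Subgroup.closure (cs.simple '' J) :=
  let b : Module.Basis B ℝ (B →₀ ℝ) := Finsupp.basisSingleOne
  let R := CoxeterRealization.ofBasis b 0 fun _ _ => neg_zero.symm
  R.simple_notMem_closure_of_linearIndependent cs b.linearIndependent hi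

end Realizations

section FiniteCoxeterGroups

open Real

variable {B : Type*} {M : CoxeterMatrix B} {W : Type*} [Group W]

lemma exists_invariant_posDef_bilinForm [Finite W] {V : Type*} [NormedAddCommGroup V]
    [InnerProductSpace ℝ V] (ρ : W →* (V ≃ₗ[ℝ] V)) :
    ∃ Q : LinearMap.BilinForm ℝ V, (∀ u v, Q u v = Q v u) ∧ (∀ v ≠ 0, 0 < Q v v) ∧
      ∀ w u v, Q (ρ w u) (ρ w v) = Q u v := by
  have := Fintype.ofFinite W
  let Q : LinearMap.BilinForm ℝ V :=
    ∑ w, (innerₗ V).compl₁₂ (ρ w : V →ₗ[ℝ] V) (ρ w : V →ₗ[ℝ] V)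
  have hQ (u v : V) : Q u v = ∑ w, inner ℝ (ρ w u) (ρ w v) := by
    simp [Q, LinearMap.sum_apply]
  refine ⟨Q, fun u v => ?_, fun v hv => ?_, fun g u v => ?_⟩
  · simp only [hQ, real_inner_comm]
  · rw [hQ]
    refine Finset.sum_pos (fun w _ => real_inner_self_pos.mpr ?_) Finset.univ_nonempty
    exact (LinearEquiv.map_ne_zero_iff _).mpr hv
  · simp only [hQ, ← LinearEquiv.mul_apply, ← map_mul]
    exact Fintype.sum_equiv (Equiv.mulRight g) _ _ fun _ => rfl

lemma CoxeterRealization.exists_symmetrizer [Finite W] {V : Type*} [NormedAddCommGroup V]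
    [InnerProductSpace ℝ V] (R : CoxeterRealization M V) (cs : CoxeterSystem M W) :
    ∃ d : B → ℝ, (∀ i, 0 < d i) ∧
      ∀ i j, R.coroot i (R.root j) * d i = R.coroot j (R.root i) * d j := by
  obtain ⟨Q, hsymm, hpos, hinv⟩ := exists_invariant_posDef_bilinForm (R.rep cs)
  have hcoroot (i : B) (v : V) : R.coroot i v * Q (R.root i) (R.root i) = 2 * Q (R.root i) v := by
    have h := hinv (cs.simple i) (R.root i) v
    simp only [R.rep_simple_apply, R.coroot_root_self, map_sub, map_smul, LinearMap.sub_apply,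
      LinearMap.smul_apply, smul_eq_mul] at h
    linear_combination h
  refine ⟨fun i => Q (R.root i) (R.root i), fun i => hpos _ fun h => ?_, fun i j => ?_⟩
  · simpa [h] using R.coroot_root_self i
  · rw [hcoroot, hcoroot, hsymm]

lemma cos_pi_div_ne_zero {m : ℕ} (h1 : m ≠ 1) (h2 : m ≠ 2) : cos (π / m) ≠ 0 := by
  rcases Nat.eq_zero_or_pos m with rfl | hpos
  · simp
  have hm : (3 : ℝ) ≤ m := by exact_mod_cast (show 3 ≤ m by omega)
  refine (cos_pos_of_mem_Ioo ⟨?_, ?_⟩).ne'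
  · linarith [pi_pos, show 0 ≤ π / m by positivity]
  · rw [div_lt_div_iff_of_pos_left pi_pos (by positivity) two_pos]
    linarith

lemma exists_potential [Finite B] [Finite W] (cs : CoxeterSystem M W) {c : B → B → ℝ}
    (hc : ∀ i j, c j i = -c i j) :
    ∃ h : B → ℝ, ∀ i j, i ≠ j → M i j ≠ 2 → c i j = h j - h i := by
  have := Fintype.ofFinite B
  let b := (EuclideanSpace.basisFun B ℝ).toBasis
  obtain ⟨d, hd, hsymm⟩ := (CoxeterRealization.ofBasis b c hc).exists_symmetrizer cs
  refine ⟨fun i => log (d i) / 2, fun i j hij h2 => ?_⟩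
  have hcos := cos_pi_div_ne_zero (M.off_diagonal i j hij) h2
  have hexp : exp (c i j) * d i = exp (-c i j) * d j := by
    have h := hsymm i j
    rw [CoxeterRealization.coroot_root_ofBasis, CoxeterRealization.coroot_root_ofBasis,
      M.symmetric j i, hc i j] at h
    exact mul_left_cancel₀ (mul_ne_zero (neg_ne_zero.mpr two_ne_zero) hcos)
      ((mul_assoc _ _ _).symm.trans (h.trans (mul_assoc _ _ _)))
  have hlog := congrArg log hexp
  rw [log_mul (exp_ne_zero _) (hd i).ne', log_mul (exp_ne_zero _) (hd j).ne', log_exp,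
    log_exp] at hlog
  linarith

/-- The Coxeter graph of `M`, without its edge labels: distinct `i` and `j` are adjacent unless the
corresponding simple reflections commute. -/
def coxeterGraph (M : CoxeterMatrix B) : SimpleGraph B where
  Adj i j := i ≠ j ∧ M i j ≠ 2
  symm := ⟨fun i j h => ⟨h.1.symm, M.symmetric i j ▸ h.2⟩⟩
  loopless := ⟨fun _ h => h.1 rfl⟩

lemma coxeterGraph_isAcyclic [Finite B] [Finite W] (cs : CoxeterSystem M W) :
    (coxeterGraph M).IsAcyclic :=
  isAcyclic_of_forall_exists_potential fun _ hc =>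
    (exists_potential cs hc).imp fun _ hh i j hij => hh i j hij.1 hij.2

lemma commute_simple_of_not_adj (cs : CoxeterSystem M W) {i j : B}
    (hij : ¬(coxeterGraph M).Adj i j) : Commute (cs.simple i) (cs.simple j) := by
  obtain rfl | hne := eq_or_ne i j
  · exact Commute.refl _
  have h2 : M i j = 2 := not_not.mp fun h => hij ⟨hne, h⟩
  have hsq := cs.simple_mul_simple_pow i j
  rw [h2, pow_two] at hsq
  simpa only [commute_iff_eq, mul_inv_rev, cs.inv_simple] using eq_inv_of_mul_eq_one_left hsq

end FiniteCoxeterGroups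

/-- For every finite Coxeter system `(W, S)` over a nonempty finite index set `B`,
there exists a Hamiltonian circuit map for `(W, S)`, where `S = {sᵢ | i ∈ B}` is the
set of simple reflections. -/
theorem exists_hamiltonianCircuitMap_of_finite_coxeterSystem
    {B W : Type*} [Fintype B] [Nonempty B] [Group W] [Finite W]
    (M : CoxeterMatrix B) (cs : CoxeterSystem M W) :
    ∃ θ : ZMod (Nat.card W) → W,
      IsHamiltonianCircuitMap (Set.range cs.simple) θ := by
  obtain ⟨σ, hσ⟩ := exists_isCayleyCircuit_of_isAcyclic (coxeterGraph_isAcyclic cs) cs.inv_simple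
    (fun _ _ hi => simple_notMem_closure_image_simple cs hi)
    (fun _ _ hij => commute_simple_of_not_adj cs hij) Finset.univ Finset.univ_nonempty
  rw [Finset.coe_univ, Set.image_univ, cs.subgroup_closure_range_simple, Subgroup.coe_top] at hσ
  exact hσ.exists_isHamiltonianCircuitMap
end

section
/- Let W be a finite group, n ≥ 3, and s : {1, …, n} → W an injective map such that each s(i) is an involution (s(i) ≠ 1 and s(i)² = 1), the elements s(1), …, s(n) generate W, and s(n) commutes with s(i) for every i ≤ n − 2. Let Ŵ be the subgroup generated by s(1), …, s(n−1) and Ŝ = {s(1), …, s(n−1)}. If there exists a Hamiltonian circuit map for (Ŵ, Ŝ), then there exists a Hamiltonian circuit map for (W, {s(1), …, s(n)}). -/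
/-!
Since `Ŵ` has more than two elements, no two consecutive steps of its circuit both multiply by
`s (n-1)`; so at every element one of the two adjacent steps multiplies by an involution `z` that
commutes with `r = s n`.

Right translates of the circuit traverse the right cosets of `Ŵ`. If a circuit already traverses a
union `U` of such cosets and contains a step `a → z * a` with `r * a ∉ U`, translate the circuit of
`Ŵ` to the coset of `r * a` so that it contains the step `r * z * a → r * a`. As `r` and `z`
commute, these are opposite sides of the square `a, z * a, r * z * a, r * a` of the Cayley graph,
and exchanging them for the two sides labelled `r` joins both circuits into one. Left
multiplication by `r` swaps the ends of the two removed steps, which now lie in the same union of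
cosets, so no later gluing needs those steps. A maximal union of cosets reached in this way is
invariant under `r`, hence is all of `W`.
-/

open Equiv MulOpposite
open scoped Pointwise

section Exchange

variable {α : Type*} {f g ρ : Perm α} {U V : Set α} {a c x : α}

theorem mem_of_eq_or_apply_eq (hf : f.IsCycleOn U) (hax : a = x ∨ f a = x) (hx : x ∈ U) :
    a ∈ U := by
  rcases hax with rfl | rfl
  · exact hx
  · exact hf.apply_mem_iff.1 hx

theorem sameCycle_apply_of_eqOn_diff_singleton (hU : U.Finite) (hf : f.IsCycleOn U) (ha : a ∈ U)
    (hρ : Set.EqOn ρ f (U \ {a})) (hx : x ∈ U) : ρ.SameCycle (f a) x := by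
  obtain ⟨n, rfl⟩ := hf.exists_pow_eq' hU (hf.1.mapsTo ha) hx
  clear hx
  induction n with
  | zero => exact .rfl
  | succ n ih =>
    have hmem : (f ^ n) (f a) ∈ U := hf.1.mapsTo.perm_pow n (hf.1.mapsTo ha)
    rw [pow_succ', Perm.mul_apply]
    by_cases h : (f ^ n) (f a) = a
    · rw [h]
    · rw [← hρ ⟨hmem, h⟩]
      exact Perm.sameCycle_apply_right.2 ih

theorem mapsTo_union_of_exchange (hf : Set.MapsTo f U U) (hg : Set.MapsTo g V V)
    (ha : a ∈ U) (hc : c ∈ V) (hρf : Set.EqOn ρ f (U \ {a})) (hρg : Set.EqOn ρ g (V \ {c}))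
    (hρa : ρ a = g c) (hρc : ρ c = f a) : Set.MapsTo ρ (U ∪ V) (U ∪ V) := by
  rintro x (hx | hx)
  · by_cases hxa : x = a
    · exact Or.inr (hxa ▸ hρa ▸ hg hc)
    · exact Or.inl (hρf ⟨hx, hxa⟩ ▸ hf hx)
  · by_cases hxc : x = c
    · exact Or.inl (hxc ▸ hρc ▸ hf ha)
    · exact Or.inr (hρg ⟨hx, hxc⟩ ▸ hg hx)

theorem isCycleOn_union_of_exchange (hU : U.Finite) (hV : V.Finite)
    (hf : f.IsCycleOn U) (hg : g.IsCycleOn V) (ha : a ∈ U) (hc : c ∈ V)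
    (hρf : Set.EqOn ρ f (U \ {a})) (hρg : Set.EqOn ρ g (V \ {c}))
    (hρa : ρ a = g c) (hρc : ρ c = f a) : ρ.IsCycleOn (U ∪ V) := by
  have hmaps := mapsTo_union_of_exchange hf.1.mapsTo hg.1.mapsTo ha hc hρf hρg hρa hρc
  have hconn : ∀ x ∈ U ∪ V, ρ.SameCycle (f a) x := by
    have hfg : ρ.SameCycle (f a) (g c) :=
      hρa ▸ Perm.sameCycle_apply_right.2 (sameCycle_apply_of_eqOn_diff_singleton hU hf ha hρf ha)
    rintro x (hx | hx)
    · exact sameCycle_apply_of_eqOn_diff_singleton hU hf ha hρf hx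
    · exact hfg.trans (sameCycle_apply_of_eqOn_diff_singleton hV hg hc hρg hx)
  exact ⟨((hU.union hV).injOn_iff_bijOn_of_mapsTo hmaps).1 ρ.injective.injOn,
    fun x hx y hy => (hconn x hx).symm.trans (hconn y hy)⟩

end Exchange

section Splice

variable {α : Type*} [DecidableEq α] {f g : Perm α} {U V : Set α} {a c : α}

/-- The permutation joining a cycle `f` through `a` and a cycle `g` through `c`, with disjoint
supports, into one: the arrows `a → f a` and `c → g c` become `a → g c` and `c → f a`. -/
def splice (f g : Perm α) (a c : α) : Perm α :=
  f * g * swap a c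

theorem splice_apply_left (hf : ∀ x ∉ U, f x = x) (hUV : Disjoint U V)
    (hgc : g c ∈ V) : splice f g a c a = g c := by
  simp [splice, hf _ (hUV.notMem_of_mem_right hgc)]

theorem splice_apply_right (hg : ∀ x ∉ V, g x = x) (hUV : Disjoint U V) (ha : a ∈ U) :
    splice f g a c c = f a := by
  simp [splice, hg _ (hUV.notMem_of_mem_left ha)]

theorem splice_eqOn_left (hg : ∀ x ∉ V, g x = x) (hUV : Disjoint U V) (hc : c ∈ V) :
    Set.EqOn (splice f g a c) f (U \ {a}) := by
  rintro x ⟨hx, hxa⟩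
  have hxc : x ≠ c := fun h => hUV.notMem_of_mem_left hx (h ▸ hc)
  simp [splice, swap_apply_of_ne_of_ne hxa hxc, hg _ (hUV.notMem_of_mem_left hx)]

theorem splice_eqOn_right (hf : ∀ x ∉ U, f x = x) (hg : Set.MapsTo g V V) (hUV : Disjoint U V)
    (ha : a ∈ U) : Set.EqOn (splice f g a c) g (V \ {c}) := by
  rintro x ⟨hx, hxc⟩
  have hxa : x ≠ a := fun h => hUV.notMem_of_mem_right hx (h ▸ ha)
  simp [splice, swap_apply_of_ne_of_ne hxa hxc, hf _ (hUV.notMem_of_mem_right (hg hx))]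

end Splice

section Circuit

variable {W : Type*} [Group W] {S C U V : Set W} {f g ρ : Perm W} {a c w : W}

/-- The permutation `f` traverses `U` as a circuit of the Cayley graph of `W` with respect to `S`.
It fixes the points outside `U`, so that circuits on disjoint sets can be spliced. -/
structure IsCircuitOn (S U : Set W) (f : Perm W) : Prop where
  isCycleOn : f.IsCycleOn U
  apply_eq_self : ∀ x ∉ U, f x = x
  step_mem : ∀ x ∈ U, f x * x⁻¹ ∈ S

theorem IsCircuitOn.mono {S' : Set W} (hf : IsCircuitOn S U f) (hS : S ⊆ S') :
    IsCircuitOn S' U f :=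
  ⟨hf.isCycleOn, hf.apply_eq_self, fun x hx => hS (hf.step_mem x hx)⟩

theorem IsCircuitOn.union_splice [DecidableEq W] (hf : IsCircuitOn S U f) (hU : U.Finite)
    (hV : V.Finite) (hg : IsCircuitOn S V g) (hUV : Disjoint U V) (ha : a ∈ U) (hc : c ∈ V)
    (hac : g c * a⁻¹ ∈ S) (hca : f a * c⁻¹ ∈ S) : IsCircuitOn S (U ∪ V) (splice f g a c) := by
  have hleft := splice_eqOn_left (f := f) (a := a) hg.apply_eq_self hUV hc
  have hright := splice_eqOn_right (c := c) hf.apply_eq_self hg.isCycleOn.1.mapsTo hUV ha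
  have hsa : splice f g a c a = g c :=
    splice_apply_left hf.apply_eq_self hUV (hg.isCycleOn.1.mapsTo hc)
  have hsc : splice f g a c c = f a := splice_apply_right hg.apply_eq_self hUV ha
  refine ⟨isCycleOn_union_of_exchange hU hV hf.isCycleOn hg.isCycleOn ha hc
    hleft hright hsa hsc, fun x hx => ?_, ?_⟩
  · obtain ⟨hxU, hxV⟩ := not_or.1 hx
    have hxa : x ≠ a := fun h => hxU (h ▸ ha)
    have hxc : x ≠ c := fun h => hxV (h ▸ hc)
    simp [splice, swap_apply_of_ne_of_ne hxa hxc, hf.apply_eq_self x hxU,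
      hg.apply_eq_self x hxV]
  · rintro x (hx | hx)
    · by_cases hxa : x = a
      · rwa [hxa, hsa]
      · exact hleft ⟨hx, hxa⟩ ▸ hf.step_mem x hx
    · by_cases hxc : x = c
      · rwa [hxc, hsc]
      · exact hright ⟨hx, hxc⟩ ▸ hg.step_mem x hx

/-- One of the two steps of `f` at `w`, the one leaving it or the one entering it, multiplies by an
element of `C`. -/
def MeetsLabel (f : Perm W) (C : Set W) (w : W) : Prop :=
  ∃ a, (a = w ∨ f a = w) ∧ f a * a⁻¹ ∈ C

theorem MeetsLabel.of_eqOn_diff_singleton (hm : MeetsLabel f C w) (hf : f.IsCycleOn U)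
    (hρ : Set.EqOn ρ f (U \ {a})) (hw : w ∈ U) (hwa : w ≠ a) (hwf : w ≠ f a) :
    MeetsLabel ρ C w := by
  obtain ⟨b, hbw, hb⟩ := hm
  have hbU : b ∈ U := mem_of_eq_or_apply_eq hf hbw hw
  have hba : b ≠ a := by
    rintro rfl
    exact hbw.elim (hwa ∘ Eq.symm) (hwf ∘ Eq.symm)
  exact ⟨b, by rwa [hρ ⟨hbU, hba⟩], by rwa [hρ ⟨hbU, hba⟩]⟩

/-- The right translate by `h` of a permutation of a group; it carries a circuit on `U` to one on
`U h` with the same labels. -/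
def rightTranslate (f : Perm W) (h : W) : Perm W :=
  Equiv.mulRight h * f * (Equiv.mulRight h)⁻¹

@[simp]
theorem rightTranslate_apply (f : Perm W) (h x : W) : rightTranslate f h x = f (x * h⁻¹) * h :=
  rfl

theorem IsCircuitOn.translate (hf : IsCircuitOn S U f) (h : W) :
    IsCircuitOn S (op h • U) (rightTranslate f h) where
  isCycleOn := hf.isCycleOn.conj
  apply_eq_self x hx := by
    rw [mem_rightCoset_iff] at hx
    simp [hf.apply_eq_self _ hx]
  step_mem x hx := by
    rw [mem_rightCoset_iff] at hx
    simpa [mul_assoc] using hf.step_mem _ hx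

theorem MeetsLabel.translate (hm : MeetsLabel f C (w * h⁻¹)) :
    MeetsLabel (rightTranslate f h) C w := by
  obtain ⟨a, haw, ha⟩ := hm
  refine ⟨a * h, ?_, by simpa [mul_assoc] using ha⟩
  simpa [eq_mul_inv_iff_mul_eq] using haw

end Circuit

section Gluing

variable {W : Type*} [Group W] {S U : Set W} {H : Subgroup W} {r z y : W} {p f : Perm W}

/-- The involutions commuting with `r` that occur as labels of the circuit `p` on `H`; at steps with
these labels, circuits on cosets of `H` can be glued along a square. -/
def gluingLabels (H : Subgroup W) (p : Perm W) (r : W) : Set W :=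
  {z | z * z = 1 ∧ Commute r z ∧ ∃ q ∈ H, p q = z * q}

theorem IsCircuitOn.gluingLabels_subset (hp : IsCircuitOn S H p) :
    gluingLabels H p r ⊆ H := by
  rintro z ⟨-, -, q, hq, hpq⟩
  exact (H.mul_mem_cancel_right hq).1 (hpq ▸ hp.isCycleOn.1.mapsTo hq)

theorem mul_mem_op_smul {k x : W} (hk : k ∈ H) (hx : x ∈ op y • (H : Set W)) :
    k * x ∈ op y • (H : Set W) := by
  rw [mem_rightCoset_iff] at hx ⊢
  simpa [mul_assoc] using H.mul_mem hk hx

theorem label_mul_mul_of_mem_gluingLabels {a b : W} (hlabel : b * a⁻¹ ∈ gluingLabels H p r) :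
    b * a⁻¹ * (r * a) = r * b := by
  rw [← mul_assoc, ← hlabel.2.1.eq, mul_assoc, inv_mul_cancel_right]

theorem IsCircuitOn.exists_on_rightCoset (hp : IsCircuitOn S H p) (hz : z ∈ gluingLabels H p r)
    (hm : ∀ w ∈ H, MeetsLabel p (gluingLabels H p r) w) (y : W) :
    ∃ g, IsCircuitOn S (op y • (H : Set W)) g ∧ g (z * y) = y ∧
      ∀ v ∈ op y • (H : Set W), MeetsLabel g (gluingLabels H p r) v := by
  have hzH := hp.gluingLabels_subset hz
  obtain ⟨hzz, -, q, hq, hpq⟩ := hz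
  set h := q⁻¹ * (z * y) with hh
  have hcoset : op y • (H : Set W) = op h • (H : Set W) := by
    rw [rightCoset_eq_iff, hh, mul_assoc, mul_inv_cancel_right]
    exact H.mul_mem (H.inv_mem hq) hzH
  refine ⟨rightTranslate p h, hcoset ▸ hp.translate h, ?_, fun v hv => ?_⟩
  · have hzyh : z * y * h⁻¹ = q := by simp [hh, mul_assoc]
    calc p (z * y * h⁻¹) * h = z * q * (q⁻¹ * (z * y)) := by rw [hzyh, hpq]
      _ = z * z * y := by group
      _ = y := by rw [hzz, one_mul]
  · rw [hcoset, mem_rightCoset_iff] at hv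
    exact (hm _ hv).translate

/-- A stage of the gluing process: `f` traverses the union `U` of right cosets of `H`, and every
element whose product with `r` has not been reached still has a step at which to glue. -/
structure IsPartialGluing (S : Set W) (H : Subgroup W) (p : Perm W) (r : W) (U : Set W)
    (f : Perm W) : Prop where
  isCircuitOn : IsCircuitOn S U f
  mul_mem : ∀ g ∈ H, ∀ x ∈ U, g * x ∈ U
  meetsLabel : ∀ w ∈ U, r * w ∉ U → MeetsLabel f (gluingLabels H p r) w

theorem IsPartialGluing.disjoint_rightCoset (hf : IsPartialGluing S H p r U f) (hy : y ∉ U) :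
    Disjoint U (op y • (H : Set W)) := by
  refine Set.disjoint_left.2 fun x hxU hxy => hy ?_
  rw [mem_rightCoset_iff] at hxy
  simpa using hf.mul_mem _ (H.inv_mem hxy) x hxU

theorem IsPartialGluing.exists_glue [Finite W] {a : W} (hf : IsPartialGluing S H p r U f)
    (hr : r * r = 1) (hrS : r ∈ S) (hp : IsCircuitOn S H p)
    (hm : ∀ w ∈ H, MeetsLabel p (gluingLabels H p r) w)
    (ha : a ∈ U) (hra : r * a ∉ U) (hlabel : f a * a⁻¹ ∈ gluingLabels H p r) :
    ∃ f', IsPartialGluing S H p r (U ∪ op (r * a) • (H : Set W)) f' := by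
  classical
  obtain ⟨g, hg, hgc, hgm⟩ := hp.exists_on_rightCoset hlabel hm (r * a)
  set V := op (r * a) • (H : Set W)
  have hrr (x : W) : r * (r * x) = x := by rw [← mul_assoc, hr, one_mul]
  rw [label_mul_mul_of_mem_gluingLabels hlabel] at hgc
  have hraV : r * a ∈ V := mem_own_rightCoset H.toSubmonoid _
  have hcV : r * f a ∈ V := hg.isCycleOn.apply_mem_iff.1 (hgc ▸ hraV)
  have hUV : Disjoint U V := hf.disjoint_rightCoset hra
  refine ⟨splice f g a (r * f a), ?_, ?_, ?_⟩
  · refine hf.isCircuitOn.union_splice U.toFinite V.toFinite hg hUV ha hcV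
      (by simpa [hgc] using hrS) ?_
    simpa [inv_eq_of_mul_eq_one_left hr] using hrS
  · exact fun k hk x => Or.imp (hf.mul_mem k hk x) (mul_mem_op_smul hk)
  · rintro v (hv | hv) hrv
    · refine (hf.meetsLabel v hv fun h => hrv (.inl h)).of_eqOn_diff_singleton
        hf.isCircuitOn.isCycleOn (splice_eqOn_left hg.apply_eq_self hUV hcV) hv ?_ ?_
      · rintro rfl
        exact hrv (.inr hraV)
      · rintro rfl
        exact hrv (.inr hcV)
    · refine (hgm v hv).of_eqOn_diff_singleton hg.isCycleOn (splice_eqOn_right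
        hf.isCircuitOn.apply_eq_self hg.isCycleOn.1.mapsTo hUV ha) hv ?_ ?_
      · rintro rfl
        exact hrv (.inl (by simpa [hrr] using hf.isCircuitOn.isCycleOn.1.mapsTo ha))
      · rw [hgc]
        rintro rfl
        exact hrv (.inl (by rwa [hrr]))

theorem IsPartialGluing.exists_extension [Finite W] {w : W} (hf : IsPartialGluing S H p r U f)
    (hr : r * r = 1) (hrS : r ∈ S) (hp : IsCircuitOn S H p)
    (hm : ∀ w ∈ H, MeetsLabel p (gluingLabels H p r) w) (hw : w ∈ U) (hrw : r * w ∉ U) :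
    ∃ U' f', IsPartialGluing S H p r U' f' ∧ U ⊂ U' := by
  obtain ⟨a, haw, hlabel⟩ := hf.meetsLabel w hw hrw
  have ha : a ∈ U := mem_of_eq_or_apply_eq hf.isCircuitOn.isCycleOn haw hw
  have hra : r * a ∉ U := by
    rcases haw with rfl | rfl
    · exact hrw
    · intro hraU
      rw [← label_mul_mul_of_mem_gluingLabels hlabel] at hrw
      exact hrw (hf.mul_mem _ (hp.gluingLabels_subset hlabel) _ hraU)
  obtain ⟨f', hf'⟩ := hf.exists_glue hr hrS hp hm ha hra hlabel
  have hraV : r * a ∈ op (r * a) • (H : Set W) := mem_own_rightCoset H.toSubmonoid _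
  exact ⟨_, f', hf', Set.subset_union_left, fun h => hra (h (.inr hraV))⟩

theorem IsCircuitOn.exists_univ [Finite W] (hp : IsCircuitOn S H p) (hr : r * r = 1)
    (hrS : r ∈ S) (hm : ∀ w ∈ H, MeetsLabel p (gluingLabels H p r) w)
    (hgen : Subgroup.closure (insert r (H : Set W)) = ⊤) :
    ∃ f, IsCircuitOn S Set.univ f := by
  have hH : ∃ f, IsPartialGluing S H p r H f :=
    ⟨p, hp, fun _ hg _ hx => H.mul_mem hg hx, fun w hw _ => hm w hw⟩
  obtain ⟨U, hHU, ⟨f, hf⟩, hmax⟩ :=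
    Finite.exists_le_maximal (p := fun U => ∃ f, IsPartialGluing S H p r U f) hH
  have hrU : ∀ w ∈ U, r * w ∈ U := by
    by_contra! ⟨w, hw, hrw⟩
    obtain ⟨U', f', hf', hlt⟩ := hf.exists_extension hr hrS hp hm hw hrw
    exact hlt.2 (hmax ⟨f', hf'⟩ hlt.1)
  have hUuniv : U = Set.univ := by
    refine Set.eq_univ_of_forall fun x => ?_
    have hx : x ∈ Subgroup.closure (insert r (H : Set W)) := hgen ▸ Subgroup.mem_top x
    induction hx using Subgroup.closure_induction_left with
    | one => exact hHU H.one_mem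
    | mul_left g hg y _ ih =>
      rcases hg with rfl | hg
      · exact hrU y ih
      · exact hf.mul_mem g hg y ih
    | inv_mul_cancel g hg y _ ih =>
      rcases hg with rfl | hg
      · rw [inv_eq_of_mul_eq_one_left hr]
        exact hrU y ih
      · exact hf.mul_mem _ (H.inv_mem hg) y ih
  exact ⟨f, hUuniv ▸ hf.isCircuitOn⟩

end Gluing

section CircuitMap

variable {W : Type*} [Group W] {S T : Set W}

theorem IsHamiltonianCircuitMap.exists_isCircuitOn_univ {θ : ZMod (Nat.card W) → W}
    (hθ : IsHamiltonianCircuitMap S θ) : ∃ f, IsCircuitOn S Set.univ f := by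
  let e : ZMod (Nat.card W) ≃ W := Equiv.ofBijective θ hθ.1
  have hzpow (n : ℤ) : e.permCongr (Equiv.addRight 1) ^ n =
      e.permCongr (Equiv.addRight (n : ZMod (Nat.card W))) := by
    simpa using (map_zpow e.permCongrHom (Equiv.addRight 1) n).symm
  refine ⟨e.permCongr (Equiv.addRight 1), ⟨⟨Set.bijOn_univ.2 (Equiv.bijective _), ?_⟩, by simp, ?_⟩⟩
  · intro x _ y _
    obtain ⟨n, hn⟩ := ZMod.intCast_surjective (e.symm y - e.symm x)
    exact ⟨n, by simp [hzpow, hn]⟩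
  · intro x _
    obtain ⟨t, rfl⟩ := e.surjective x
    have hstep : e (t + 1) * (e t)⁻¹ ∈ S := hθ.2 t
    simpa using hstep

theorem IsCircuitOn.exists_isHamiltonianCircuitMap [Finite W] {f : Perm W}
    (hf : IsCircuitOn S Set.univ f) :
    ∃ θ : ZMod (Nat.card W) → W, IsHamiltonianCircuitMap S θ := by
  have : Fintype W := Fintype.ofFinite W
  have : NeZero (Nat.card W) := ⟨Nat.card_pos.ne'⟩
  have hcycle : f.IsCycleOn (Finset.univ : Finset W) := by simpa using hf.isCycleOn
  have hval (n : ℕ) : (f ^ (n : ZMod (Nat.card W)).val) 1 = (f ^ n) 1 := by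
    rw [hcycle.pow_apply_eq_pow_apply (Finset.mem_univ _), ZMod.val_natCast, Finset.card_univ,
      ← Nat.card_eq_fintype_card]
    exact Nat.mod_modEq _ _
  refine ⟨fun t => (f ^ t.val) 1,
    (Nat.bijective_iff_surjective_and_card _).2 ⟨fun x => ?_, Nat.card_zmod _⟩, fun t => ?_⟩
  · obtain ⟨n, -, hn⟩ := hcycle.exists_pow_eq (Finset.mem_univ 1) (Finset.mem_univ x)
    exact ⟨n, (hval n).trans hn⟩
  · have hsucc : (f ^ (t + 1).val) 1 = f ((f ^ t.val) 1) := by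
      simpa [pow_succ'] using hval (t.val + 1)
    simpa only [hsucc] using hf.step_mem _ (Set.mem_univ _)

theorem IsCircuitOn.exists_on_subgroup {H : Subgroup W} {f : Perm H}
    (hf : IsCircuitOn {w : H | (w : W) ∈ T} Set.univ f) : ∃ p, IsCircuitOn T H p := by
  classical
  refine ⟨Perm.ofSubtype f, ?_, fun x hx => Perm.ofSubtype_apply_of_not_mem f hx, fun x hx => ?_⟩
  · simpa [Perm.ofSubtype] using hf.isCycleOn.extendDomain (Equiv.refl H)
  · lift x to H using hx
    simpa using hf.step_mem x (Set.mem_univ x)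

theorem IsCircuitOn.meetsLabel_compl_singleton {U : Set W} {p : Perm W} {t w : W}
    (hp : IsCircuitOn S U p) (hU : 2 < U.ncard) (ht : t * t = 1) (hw : w ∈ U) :
    MeetsLabel p (S \ {t}) w := by
  by_contra hm
  simp only [MeetsLabel, not_exists, not_and] at hm
  have hlabel {a : W} (ha : a ∈ U) (haw : a = w ∨ p a = w) : p a = t * a := by
    by_contra h
    exact hm a haw ⟨hp.step_mem a ha, fun h' => h (mul_inv_eq_iff_eq_mul.1 h')⟩
  have hv : p⁻¹ w ∈ U := hp.isCycleOn.apply_mem_iff.1 (by simpa)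
  have hsq : (p ^ 2) (p⁻¹ w) = p⁻¹ w := by
    have hwv : w = t * p⁻¹ w := by simpa using hlabel hv (.inr (by simp))
    calc (p ^ 2) (p⁻¹ w) = p w := by simp [pow_two]
      _ = t * (t * p⁻¹ w) := by rw [← hwv, hlabel hw (.inl rfl)]
      _ = p⁻¹ w := by rw [← mul_assoc, ht, one_mul]
  have hcycle := hp.isCycleOn
  lift U to Finset W using Set.finite_of_ncard_pos (by omega)
  rw [Set.ncard_coe_finset] at hU
  exact hU.not_ge (Nat.le_of_dvd two_pos ((hcycle.pow_apply_eq hv).1 hsq))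

theorem two_lt_ncard_closure [Finite W] {a b : W} (ha : a ∈ T) (hb : b ∈ T) (ha1 : a ≠ 1)
    (hb1 : b ≠ 1) (hab : a ≠ b) : 2 < (Subgroup.closure T : Set W).ncard :=
  (Set.two_lt_ncard_iff).2 ⟨1, a, b, one_mem _, Subgroup.subset_closure ha,
    Subgroup.subset_closure hb, ha1.symm, hb1.symm, hab⟩

theorem exists_isHamiltonianCircuitMap_insert [Finite W] {r t : W} (hT : ∀ z ∈ T, z * z = 1)
    (ht : t * t = 1) (hr : r * r = 1) (hcomm : ∀ z ∈ T, z ≠ t → Commute r z)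
    (hcard : 2 < (Subgroup.closure T : Set W).ncard) (hgen : Subgroup.closure (insert r T) = ⊤)
    (hθ : ∃ θ : ZMod (Nat.card (Subgroup.closure T)) → Subgroup.closure T,
      IsHamiltonianCircuitMap {w : Subgroup.closure T | (w : W) ∈ T} θ) :
    ∃ θ : ZMod (Nat.card W) → W, IsHamiltonianCircuitMap (insert r T) θ := by
  obtain ⟨θ, hθ⟩ := hθ
  obtain ⟨f, hf⟩ := hθ.exists_isCircuitOn_univ
  obtain ⟨p, hp⟩ := hf.exists_on_subgroup
  have hm : ∀ w ∈ Subgroup.closure T,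
      MeetsLabel p (gluingLabels (Subgroup.closure T) p r) w := fun w hw => by
    obtain ⟨a, haw, haT, hat⟩ := hp.meetsLabel_compl_singleton hcard ht hw
    have ha : a ∈ Subgroup.closure T := mem_of_eq_or_apply_eq hp.isCycleOn haw hw
    exact ⟨a, haw, hT _ haT, hcomm _ haT hat, a, ha, by group⟩
  have hgen' : Subgroup.closure (insert r (Subgroup.closure T : Set W)) = ⊤ :=
    top_unique (hgen ▸ Subgroup.closure_mono (Set.insert_subset_insert Subgroup.subset_closure))
  obtain ⟨F, hF⟩ := (hp.mono (Set.subset_insert r T)).exists_univ hr (Set.mem_insert r T) hm hgen'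
  exact hF.exists_isHamiltonianCircuitMap

end CircuitMap

theorem range_eq_insert_image {α : Type*} {n : ℕ} (s : Fin n → α) (hn : n - 1 < n) :
    Set.range s = insert (s ⟨n - 1, hn⟩) (s '' {i : Fin n | (i : ℕ) + 1 < n}) := by
  refine (Set.range_subset_iff.2 fun i => ?_).antisymm
    (Set.insert_subset ⟨_, rfl⟩ (Set.image_subset_range _ _))
  by_cases hi : (i : ℕ) + 1 < n
  · exact .inr ⟨i, hi, rfl⟩
  · exact .inl (congrArg s (Fin.ext (by simp only; omega)))

/-- The induction step of the Conway–Sloane–Wilks construction: let `W` be a finite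
group generated by `n ≥ 3` distinct involutions `s 1, …, s n` (written here over
`Fin n`), with `s n` commuting with `s i` for all `i ≤ n - 2`.  If the subgroup `Ŵ`
generated by `s 1, …, s (n-1)` has a Hamiltonian circuit map with respect to
`Ŝ = {s 1, …, s (n-1)}`, then `W` has a Hamiltonian circuit map with respect to
`{s 1, …, s n}`. -/
theorem hamiltonianCircuitMap_of_subgroup_step
    {W : Type*} [Group W] [Finite W] (n : ℕ) (hn : 3 ≤ n)
    (s : Fin n → W) (hinj : Function.Injective s)
    (hne : ∀ i, s i ≠ 1) (hsq : ∀ i, s i ^ 2 = 1)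
    (hgen : Subgroup.closure (Set.range s) = ⊤)
    (hcomm : ∀ i : Fin n, (i : ℕ) + 2 < n → Commute (s ⟨n - 1, by omega⟩) (s i))
    (Whut : Subgroup W)
    (hWhut : Whut = Subgroup.closure (s '' {i : Fin n | (i : ℕ) + 1 < n}))
    (hhat : ∃ θ : ZMod (Nat.card Whut) → Whut,
      IsHamiltonianCircuitMap
        {w : Whut | (w : W) ∈ s '' {i : Fin n | (i : ℕ) + 1 < n}} θ) :
    ∃ θ : ZMod (Nat.card W) → W, IsHamiltonianCircuitMap (Set.range s) θ := by
  subst hWhut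
  set T : Set W := s '' {i : Fin n | (i : ℕ) + 1 < n}
  have hss (i : Fin n) : s i * s i = 1 := (pow_two (s i)).symm.trans (hsq i)
  have hcard : 2 < (Subgroup.closure T : Set W).ncard :=
    two_lt_ncard_closure (a := s ⟨0, by omega⟩) (b := s ⟨1, by omega⟩)
      ⟨_, by simp only [Set.mem_ofPred_eq]; omega, rfl⟩
      ⟨_, by simp only [Set.mem_ofPred_eq]; omega, rfl⟩ (hne _) (hne _) (hinj.ne (by simp))
  rw [range_eq_insert_image s (by omega)] at hgen ⊢
  refine exists_isHamiltonianCircuitMap_insert (t := s ⟨n - 2, by omega⟩) ?_ (hss _) (hss _) ?_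
    hcard hgen hhat
  · rintro _ ⟨i, -, rfl⟩
    exact hss i
  · rintro _ ⟨i, hi, rfl⟩ hit
    refine hcomm i (lt_of_le_of_ne hi fun h => hit (congrArg s (Fin.ext ?_)))
    simp only; omega
end

section
/- Let (W, S) be a finite Coxeter system over the index set B = {1, 2, 3} with M 1 3 = 2, M 1 2 ∈ {3, 4} and M 2 3 ∈ {3, 4} (so the Coxeter diagram is a path 1 — 2 — 3 of type A₃ or B₃). Then there exists a Hamiltonian circuit map θ : ℤ/kℤ → W (k = |W|) that is 2-convenient: θ(2t+1) = s₂ · θ(2t) for every t ∈ ℤ, i.e. every second edge of the Hamilton circuit is labeled by the middle simple reflection s₂. -/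
/-! The simple reflections `s₁` and `s₃` commute, so left multiplication by them cuts `W` into
squares `{w, s₁w, s₃w, s₁s₃w}`. Start from the circuits alternating `s₂` and `s₁`. As long as some
`w` and `s₃w` lie on different circuits, replace in the square of `w` the two `s₁`-edges by the two
`s₃`-edges; this merges the two circuits and keeps all `s₂`-edges. The points of a square switched
in this way stay on one circuit, so once no further merge is possible every circuit is closed under
all generators, and hence there is only one. -/

open Function (Bijective Injective Involutive Periodic)
open Set

/-- A fixed-point-free involution, viewed as the perfect matching with edges `{x, f x}`. -/
structure IsFixedPointFreeInvolution {X : Type*} (f : X → X) : Prop where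
  involutive : Involutive f
  apply_ne : ∀ x, f x ≠ x

/-- The walk `x, f x, g (f x), f (g (f x)), …` applying `f` and `g` alternately, `f` first. -/
def alternatingWalk {X : Type*} (f g : X → X) (x : X) : ℕ → X
  | 0 => x
  | n + 1 => (if Even n then f else g) (alternatingWalk f g x n)

/-- The partition of `X` into the connected components of the graph with edges `{x, f x}` and
`{x, g x}`. -/
def alternatingSetoid {X : Type*} (f g : X → X) : Setoid X :=
  Relation.EqvGen.setoid fun x y => f x = y ∨ g x = y

section Alternating

variable {X : Type*} {f g g' : X → X} {x : X}

theorem alternatingWalk_succ_of_even {n : ℕ} (hn : Even n) :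
    alternatingWalk f g x (n + 1) = f (alternatingWalk f g x n) := by
  rw [alternatingWalk, if_pos hn]

theorem alternatingWalk_succ_of_odd {n : ℕ} (hn : Odd n) :
    alternatingWalk f g x (n + 1) = g (alternatingWalk f g x n) := by
  rw [alternatingWalk, if_neg (Nat.not_even_iff_odd.mpr hn)]

theorem alternatingSetoid_le_iff {r : Setoid X} :
    alternatingSetoid f g ≤ r ↔ ∀ x, r x (f x) ∧ r x (g x) := by
  constructor
  · exact fun h x => ⟨h (.rel _ _ (.inl rfl)), h (.rel _ _ (.inr rfl))⟩
  · refine fun h => Setoid.eqvGen_le ?_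
    rintro x _ (rfl | rfl)
    exacts [(h x).1, (h x).2]

theorem alternatingSetoid_apply_left (x : X) : alternatingSetoid f g x (f x) :=
  (alternatingSetoid_le_iff.mp le_rfl x).1

theorem alternatingSetoid_apply_right (x : X) : alternatingSetoid f g x (g x) :=
  (alternatingSetoid_le_iff.mp le_rfl x).2

theorem alternatingSetoid_alternatingWalk (n : ℕ) :
    alternatingSetoid f g x (alternatingWalk f g x n) := by
  induction n with
  | zero => exact (alternatingSetoid f g).refl x
  | succ n ih =>
    refine (alternatingSetoid f g).trans ih ?_
    rcases n.even_or_odd with hn | hn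
    · rw [alternatingWalk_succ_of_even hn]
      exact alternatingSetoid_apply_left _
    · rw [alternatingWalk_succ_of_odd hn]
      exact alternatingSetoid_apply_right _

theorem alternatingWalk_eq_of_eq_add (hf : Injective f) (hg : Injective g) {k : ℕ} (hk : Even k)
    {i : ℕ} (h : alternatingWalk f g x i = alternatingWalk f g x (i + k)) :
    alternatingWalk f g x k = x := by
  induction i with
  | zero => rw [← Nat.zero_add k, ← h, alternatingWalk]
  | succ i ih =>
    refine ih ?_
    rw [Nat.add_right_comm] at h
    rcases i.even_or_odd with hi | hi
    · rw [alternatingWalk_succ_of_even hi, alternatingWalk_succ_of_even (hi.add hk)] at h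
      exact hf h
    · rw [alternatingWalk_succ_of_odd hi, alternatingWalk_succ_of_odd (hi.add_even hk)] at h
      exact hg h

theorem periodic_alternatingWalk {m : ℕ} (hm : Even m) (h : alternatingWalk f g x m = x) :
    Periodic (alternatingWalk f g x) m := by
  intro n
  induction n with
  | zero => rw [Nat.zero_add, h, alternatingWalk]
  | succ n ih =>
    rw [Nat.add_right_comm, alternatingWalk, alternatingWalk, ih]
    simp only [Nat.even_add, hm, iff_true]

theorem alternatingWalk_sub_one (hg : Involutive g) {m : ℕ} (hm : Even m) (hpos : 0 < m)
    (h : alternatingWalk f g x m = x) : alternatingWalk f g x (m - 1) = g x := by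
  obtain ⟨k, rfl⟩ := Nat.exists_eq_add_one_of_ne_zero hpos.ne'
  have hk : Odd k := by simpa only [Nat.even_add_one, Nat.not_even_iff_odd] using hm
  rw [alternatingWalk_succ_of_odd hk] at h
  rw [Nat.add_sub_cancel]
  exact hg.eq_iff.mp h

namespace IsFixedPointFreeInvolution

-- Reversing the step into the later point turns a coincidence at odd distance into one at distance
-- shorter by two; at distance one it is a fixed point.
theorem alternatingWalk_ne_add_odd (hf : IsFixedPointFreeInvolution f)
    (hg : IsFixedPointFreeInvolution g) (i k : ℕ) :
    alternatingWalk f g x i ≠ alternatingWalk f g x (i + (2 * k + 1)) := by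
  induction k generalizing i with
  | zero =>
    rcases i.even_or_odd with hi | hi
    · rw [Nat.mul_zero, Nat.zero_add, alternatingWalk_succ_of_even hi]
      exact (hf.apply_ne _).symm
    · rw [Nat.mul_zero, Nat.zero_add, alternatingWalk_succ_of_odd hi]
      exact (hg.apply_ne _).symm
  | succ k ih =>
    intro h
    refine ih (i + 1) ?_
    rw [show i + (2 * (k + 1) + 1) = i + 1 + (2 * k + 1) + 1 by ring] at h
    rcases i.even_or_odd with hi | hi
    · have hj : Even (i + 1 + (2 * k + 1)) := by grind
      rw [alternatingWalk_succ_of_even hi, h, alternatingWalk_succ_of_even hj, hf.involutive]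
    · have hj : Odd (i + 1 + (2 * k + 1)) := by grind
      rw [alternatingWalk_succ_of_odd hi, h, alternatingWalk_succ_of_odd hj, hg.involutive]

theorem alternatingWalk_sub_eq (hf : IsFixedPointFreeInvolution f)
    (hg : IsFixedPointFreeInvolution g) {i j : ℕ} (hij : i ≤ j)
    (h : alternatingWalk f g x i = alternatingWalk f g x j) :
    Even (j - i) ∧ alternatingWalk f g x (j - i) = x := by
  obtain ⟨k, rfl⟩ := Nat.exists_eq_add_of_le hij
  have hk : Even k := by
    by_contra hk
    obtain ⟨l, rfl⟩ := Nat.not_even_iff_odd.mp hk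
    exact hf.alternatingWalk_ne_add_odd hg i l h
  rw [Nat.add_sub_cancel_left]
  exact ⟨hk, alternatingWalk_eq_of_eq_add hf.involutive.injective hg.involutive.injective hk h⟩

variable [Finite X]

theorem exists_even_period (hf : IsFixedPointFreeInvolution f)
    (hg : IsFixedPointFreeInvolution g) (x : X) :
    ∃ m, 0 < m ∧ Even m ∧ alternatingWalk f g x m = x ∧
      InjOn (alternatingWalk f g x) (Iio m) := by
  classical
  have hreturn : ∃ m, 0 < m ∧ alternatingWalk f g x m = x := by
    obtain ⟨i, j, hij, h⟩ :=
      Set.Finite.exists_lt_map_eq_of_forall_mem (fun n => mem_univ (alternatingWalk f g x n))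
        finite_univ
    exact ⟨j - i, Nat.sub_pos_of_lt hij, (hf.alternatingWalk_sub_eq hg hij.le h).2⟩
  obtain ⟨hpos, hx⟩ := Nat.find_spec hreturn
  refine ⟨Nat.find hreturn, hpos, ?_, hx, ?_⟩
  · exact (hf.alternatingWalk_sub_eq hg (Nat.zero_le _) hx.symm).1
  · intro i hi j hj h
    wlog hij : i < j generalizing i j
    · exact (not_lt.mp hij).eq_or_lt.elim Eq.symm fun hji => (this hj hi h.symm hji).symm
    exact absurd ⟨Nat.sub_pos_of_lt hij, (hf.alternatingWalk_sub_eq hg hij.le h).2⟩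
      (Nat.find_min hreturn ((Nat.sub_le j i).trans_lt hj))

theorem exists_alternatingWalk_eq (hf : IsFixedPointFreeInvolution f)
    (hg : IsFixedPointFreeInvolution g) {y : X} (h : alternatingSetoid f g x y) :
    ∃ n, alternatingWalk f g x n = y := by
  obtain ⟨m, hpos, hm, hx, -⟩ := hf.exists_even_period hg x
  have hpred (n : ℕ) : alternatingWalk f g x (n + (m - 1) + 1) = alternatingWalk f g x n := by
    rw [Nat.add_assoc, Nat.sub_add_cancel hpos, periodic_alternatingWalk hm hx]
  have hclosed_left (y : X) (hy : y ∈ range (alternatingWalk f g x)) :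
      f y ∈ range (alternatingWalk f g x) := by
    obtain ⟨n, rfl⟩ := hy
    rcases n.even_or_odd with hn | hn
    · exact ⟨n + 1, alternatingWalk_succ_of_even hn⟩
    · refine ⟨n + (m - 1), ?_⟩
      rw [← hpred n, alternatingWalk_succ_of_even (by grind), hf.involutive]
  have hclosed_right (y : X) (hy : y ∈ range (alternatingWalk f g x)) :
      g y ∈ range (alternatingWalk f g x) := by
    obtain ⟨n, rfl⟩ := hy
    rcases n.even_or_odd with hn | hn
    · refine ⟨n + (m - 1), ?_⟩
      rw [← hpred n, alternatingWalk_succ_of_odd (by grind), hg.involutive]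
    · exact ⟨n + 1, alternatingWalk_succ_of_odd hn⟩
  have hle : alternatingSetoid f g ≤ Setoid.ker (· ∈ range (alternatingWalk f g x)) :=
    alternatingSetoid_le_iff.mpr fun y =>
      ⟨propext ⟨hclosed_left y, fun h => hf.involutive y ▸ hclosed_left _ h⟩,
        propext ⟨hclosed_right y, fun h => hg.involutive y ▸ hclosed_right _ h⟩⟩
  exact (hle h).mp ⟨0, rfl⟩

theorem exists_alternating_circuit (hf : IsFixedPointFreeInvolution f)
    (hg : IsFixedPointFreeInvolution g) (hconn : ∀ y, alternatingSetoid f g x y) :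
    ∃ θ : ZMod (Nat.card X) → X, Bijective θ ∧
      (∀ t, θ (t + 1) = f (θ t) ∨ θ (t + 1) = g (θ t)) ∧
      (∀ t, θ (2 * t + 1) = f (θ (2 * t))) := by
  obtain ⟨m, hpos, hm, hx, hinj⟩ := hf.exists_even_period hg x
  have : NeZero m := ⟨hpos.ne'⟩
  let θ (t : ZMod m) : X := alternatingWalk f g x t.val
  have hθ (n : ℕ) : θ n = alternatingWalk f g x n := by
    simp only [θ, ZMod.val_natCast, (periodic_alternatingWalk hm hx).map_mod_nat]
  have hbij : Bijective θ := by
    constructor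
    · exact fun t u h => ZMod.val_injective m (hinj t.val_lt u.val_lt h)
    · intro y
      obtain ⟨n, hn⟩ := hf.exists_alternatingWalk_eq hg (hconn y)
      exact ⟨n, (hθ n).trans hn⟩
  obtain rfl : Nat.card X = m := by
    rw [← Nat.card_congr (Equiv.ofBijective θ hbij), Nat.card_zmod]
  refine ⟨θ, hbij, fun t => ?_, fun t => ?_⟩ <;>
    obtain ⟨n, rfl⟩ := ZMod.natCast_zmod_surjective t
  · rw [← Nat.cast_succ, hθ, hθ]
    exact n.even_or_odd.imp alternatingWalk_succ_of_even alternatingWalk_succ_of_odd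
  · have h := hθ (2 * n + 1)
    rw [alternatingWalk_succ_of_even (even_two_mul n), ← hθ] at h
    exact_mod_cast h

-- The closed walk from `x` uses the edge `{x, g x}` only in its last step.
theorem alternatingSetoid_of_eq_off_edge (hf : IsFixedPointFreeInvolution f)
    (hg : IsFixedPointFreeInvolution g)
    (h : ∀ y, alternatingSetoid f g x y → y ≠ x → y ≠ g x → g' y = g y) :
    alternatingSetoid f g' x (g x) := by
  obtain ⟨m, hpos, hm, hx, hinj⟩ := hf.exists_even_period hg x
  have hlast := alternatingWalk_sub_one hg.involutive hm hpos hx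
  have hwalk : ∀ k < m, alternatingWalk f g' x k = alternatingWalk f g x k := by
    intro k hk
    induction k with
    | zero => rfl
    | succ k ih =>
      have hkm : k < m := Nat.lt_of_succ_lt hk
      rcases k.even_or_odd with hk_even | hk_odd
      · rw [alternatingWalk_succ_of_even hk_even, alternatingWalk_succ_of_even hk_even, ih hkm]
      · rw [alternatingWalk_succ_of_odd hk_odd, alternatingWalk_succ_of_odd hk_odd, ih hkm]
        refine h _ (alternatingSetoid_alternatingWalk k) (fun heq => ?_) (fun heq => ?_)
        · exact hk_odd.pos.ne' (hinj hkm hpos heq)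
        · have := hinj hkm (Nat.sub_lt hpos one_pos) (heq.trans hlast.symm)
          lia
  rw [← hlast, ← hwalk _ (Nat.sub_lt hpos one_pos)]
  exact alternatingSetoid_alternatingWalk _

theorem alternatingSetoid_le_of_eq_off_two_edges (hf : IsFixedPointFreeInvolution f)
    (hg : IsFixedPointFreeInvolution g) {x z : X} (hxz : ¬ alternatingSetoid f g x z)
    (h : ∀ y ∉ ({x, g x, z, g z} : Set X), g' y = g y) :
    alternatingSetoid f g ≤ alternatingSetoid f g' := by
  have hxz' : ¬ alternatingSetoid f g x (g z) := fun hx =>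
    hxz ((alternatingSetoid f g).trans hx
      ((alternatingSetoid f g).symm (alternatingSetoid_apply_right z)))
  have hzx' : ¬ alternatingSetoid f g z (g x) := fun hz =>
    hxz ((alternatingSetoid f g).trans (alternatingSetoid_apply_right x)
      ((alternatingSetoid f g).symm hz))
  have hx : alternatingSetoid f g' x (g x) := by
    refine hf.alternatingSetoid_of_eq_off_edge hg fun y hy hyx hygx => h y ?_
    rintro (rfl | rfl | rfl | rfl)
    exacts [hyx rfl, hygx rfl, hxz hy, hxz' hy]
  have hz : alternatingSetoid f g' z (g z) := by
    refine hf.alternatingSetoid_of_eq_off_edge hg fun y hy hyz hygz => h y ?_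
    rintro (rfl | rfl | rfl | rfl)
    exacts [hxz ((alternatingSetoid f g).symm hy), hzx' hy, hyz rfl, hygz rfl]
  refine alternatingSetoid_le_iff.mpr fun y => ⟨alternatingSetoid_apply_left y, ?_⟩
  by_cases hy : y ∈ ({x, g x, z, g z} : Set X)
  · rcases hy with rfl | rfl | rfl | rfl
    · exact hx
    · rw [hg.involutive]
      exact (alternatingSetoid f g').symm hx
    · exact hz
    · rw [hg.involutive]
      exact (alternatingSetoid f g').symm hz
  · rw [← h y hy]
    exact alternatingSetoid_apply_right y

end IsFixedPointFreeInvolution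

end Alternating

section Switching

variable {X : Type*} {a b c : X → X} {T : Set X} {x : X}

/-- The orbit of `x` under two commuting involutions `a` and `c`: the unit on which a matching is
switched between `a` and `c`. It need not have four distinct elements. -/
def commutingSquare (a c : X → X) (x : X) : Set X :=
  {x, a x, c x, a (c x)}

open scoped Classical in
/-- The matching `a`, switched to `c` on `T`. It is again a matching when `T` is closed under `a`
and `c`. -/
noncomputable def switchOn (a c : X → X) (T : Set X) : X → X :=
  T.piecewise c a

theorem switchOn_of_mem (hx : x ∈ T) : switchOn a c T x = c x := by
  classical exact piecewise_eq_of_mem _ _ _ hx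

theorem switchOn_of_notMem (hx : x ∉ T) : switchOn a c T x = a x := by
  classical exact piecewise_eq_of_notMem _ _ _ hx

theorem IsFixedPointFreeInvolution.switchOn (ha : IsFixedPointFreeInvolution a)
    (hc : IsFixedPointFreeInvolution c) (haT : ∀ x, a x ∈ T ↔ x ∈ T)
    (hcT : ∀ x, c x ∈ T ↔ x ∈ T) : IsFixedPointFreeInvolution (switchOn a c T) where
  involutive x := by
    by_cases hx : x ∈ T
    · rw [switchOn_of_mem hx, switchOn_of_mem ((hcT x).mpr hx), hc.involutive]
    · rw [switchOn_of_notMem hx, switchOn_of_notMem ((haT x).not.mpr hx), ha.involutive]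
  apply_ne x := by
    by_cases hx : x ∈ T
    · exact switchOn_of_mem hx ▸ hc.apply_ne x
    · exact switchOn_of_notMem hx ▸ ha.apply_ne x

theorem apply_left_mem_commutingSquare_iff (ha : Involutive a) {y : X} :
    a y ∈ commutingSquare a c x ↔ y ∈ commutingSquare a c x := by
  grind [commutingSquare, Involutive]

theorem apply_right_mem_commutingSquare_iff (hc : Involutive c) (hac : Function.Commute a c)
    {y : X} : c y ∈ commutingSquare a c x ↔ y ∈ commutingSquare a c x := by
  have hcomm := hac.eq
  grind [commutingSquare, Involutive]

theorem alternatingSetoid_le_switchOn_union_commutingSquare [Finite X]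
    (hb : IsFixedPointFreeInvolution b) (hT : IsFixedPointFreeInvolution (switchOn a c T))
    (hx : x ∉ T) (hcx : c x ∉ T)
    (hxc : ¬ alternatingSetoid b (switchOn a c T) x (c x)) :
    alternatingSetoid b (switchOn a c T) ≤
      alternatingSetoid b (switchOn a c (T ∪ commutingSquare a c x)) := by
  refine hb.alternatingSetoid_le_of_eq_off_two_edges hT hxc fun y hy => ?_
  rw [switchOn_of_notMem hx, switchOn_of_notMem hcx] at hy
  by_cases hyT : y ∈ T
  · rw [switchOn_of_mem hyT, switchOn_of_mem (.inl hyT)]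
  · have hy_union : y ∉ T ∪ commutingSquare a c x := not_or.mpr ⟨hyT, hy⟩
    rw [switchOn_of_notMem hyT, switchOn_of_notMem hy_union]

theorem exists_matching_connecting_commuting_involutions [Finite X]
    (ha : IsFixedPointFreeInvolution a) (hb : IsFixedPointFreeInvolution b)
    (hc : IsFixedPointFreeInvolution c) (hac : Function.Commute a c) :
    ∃ g, IsFixedPointFreeInvolution g ∧ (∀ x, g x = a x ∨ g x = c x) ∧
      ∀ x, alternatingSetoid b g x (a x) ∧ alternatingSetoid b g x (c x) := by
  let admissible : Set (Set X) := {T | (∀ x, a x ∈ T ↔ x ∈ T) ∧ (∀ x, c x ∈ T ↔ x ∈ T) ∧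
    ∀ x, alternatingSetoid b (switchOn a c T) x (a x)}
  have hempty : ∅ ∈ admissible := by
    refine ⟨fun _ => Iff.rfl, fun _ => Iff.rfl, fun x => ?_⟩
    rw [← switchOn_of_notMem (a := a) (c := c) (notMem_empty x)]
    exact alternatingSetoid_apply_right x
  obtain ⟨T, ⟨haT, hcT, hT⟩, hmax⟩ := (toFinite admissible).exists_maximal ⟨∅, hempty⟩
  have hg := ha.switchOn hc haT hcT
  refine ⟨switchOn a c T, hg, fun x => ?_, fun x => ⟨hT x, ?_⟩⟩
  · exact (em (x ∈ T)).symm.imp switchOn_of_notMem switchOn_of_mem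
  by_cases hx : x ∈ T
  · rw [← switchOn_of_mem (a := a) (c := c) hx]
    exact alternatingSetoid_apply_right x
  by_contra hxc
  have hle :=
    alternatingSetoid_le_switchOn_union_commutingSquare hb hg hx ((hcT x).not.mpr hx) hxc
  have hadm : T ∪ commutingSquare a c x ∈ admissible :=
    ⟨fun y => or_congr (haT y) (apply_left_mem_commutingSquare_iff ha.involutive),
      fun y => or_congr (hcT y) (apply_right_mem_commutingSquare_iff hc.involutive hac),
      fun y => hle (hT y)⟩
  exact hx (hmax hadm subset_union_left (.inr (.inl rfl)))

end Switching

section Group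

variable {W : Type*} [Group W]

theorem isFixedPointFreeInvolution_mul_left {s : W} (hs : orderOf s = 2) :
    IsFixedPointFreeInvolution (s * ·) := by
  obtain ⟨hsq, hne⟩ := orderOf_eq_prime_iff.mp hs
  exact ⟨fun w => by rw [← mul_assoc, ← sq, hsq, one_mul], fun w => mul_eq_right.not.mpr hne⟩

theorem setoid_one_of_closure_eq_top {S : Set W} (hS : Subgroup.closure S = ⊤) {r : Setoid W}
    (hr : ∀ s ∈ S, ∀ w, r w (s * w)) (w : W) : r 1 w := by
  have hw : w ∈ Subgroup.closure S := hS ▸ Subgroup.mem_top w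
  induction hw using Subgroup.closure_induction_left with
  | one => exact r.refl 1
  | mul_left s hs w _ ih => exact r.trans ih (hr s hs w)
  | inv_mul_cancel s hs w _ ih =>
    have h := hr s hs (s⁻¹ * w)
    rw [mul_inv_cancel_left] at h
    exact r.trans ih (r.symm h)

theorem exists_two_convenient_hamiltonianCircuitMap_path_rank_three_general [Finite W]
    (s : Fin 3 → W) (hs : ∀ i, orderOf (s i) = 2) (hcomm : Commute (s 0) (s 2))
    (hgen : Subgroup.closure (range s) = ⊤) :
    ∃ θ : ZMod (Nat.card W) → W, Bijective θ ∧
      (∀ t, θ (t + 1) * (θ t)⁻¹ ∈ range s) ∧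
      (∀ t : ZMod (Nat.card W), θ (2 * t + 1) = s 1 * θ (2 * t)) := by
  have hinv (i : Fin 3) : IsFixedPointFreeInvolution (s i * ·) :=
    isFixedPointFreeInvolution_mul_left (hs i)
  have hcomm' : Function.Commute (s 0 * ·) (s 2 * ·) := fun w => by
    simp only [← mul_assoc, hcomm.eq]
  obtain ⟨g, hg, hg_or, hrel⟩ :=
    exists_matching_connecting_commuting_involutions (hinv 0) (hinv 1) (hinv 2) hcomm'
  have hconn : ∀ w, alternatingSetoid (s 1 * ·) g 1 w := by
    refine setoid_one_of_closure_eq_top hgen ?_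
    rintro _ ⟨i, rfl⟩ w
    fin_cases i
    exacts [(hrel w).1, alternatingSetoid_apply_left w, (hrel w).2]
  obtain ⟨θ, hbij, hstep, hmid⟩ := (hinv 1).exists_alternating_circuit hg hconn
  refine ⟨θ, hbij, fun t => ?_, hmid⟩
  have hlabel : ∃ i, θ (t + 1) = s i * θ t := by
    rcases hstep t with h | h
    · exact ⟨1, h⟩
    · exact (hg_or (θ t)).elim (fun h' => ⟨0, h.trans h'⟩) fun h' => ⟨2, h.trans h'⟩
  obtain ⟨i, hi⟩ := hlabel
  exact ⟨i, eq_mul_inv_of_mul_eq hi.symm⟩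

end Group

section Coxeter

variable {B W : Type*} [Group W] {M : CoxeterMatrix B} (cs : CoxeterSystem M W)

theorem orderOf_simple (i : B) : orderOf (cs.simple i) = 2 := by
  refine orderOf_eq_prime (cs.simple_sq i) fun h => ?_
  simpa only [h, cs.length_one, zero_ne_one] using cs.length_simple i

theorem commute_simple_of_eq_two {i j : B} (hij : M i j = 2) :
    Commute (cs.simple i) (cs.simple j) := by
  have h := cs.simple_mul_simple_pow i j
  rw [hij, sq] at h
  have h' := eq_inv_of_mul_eq_one_left h
  rwa [mul_inv_rev, cs.inv_simple, cs.inv_simple] at h'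

end Coxeter

/-- For a finite Coxeter system of rank 3 whose diagram is a path `1 — 2 — 3` of type
`A₃` or `B₃` (i.e. `M 1 3 = 2` and `M 1 2, M 2 3 ∈ {3, 4}`), there is a `2`-convenient
Hamiltonian circuit map: a bijection `θ : ℤ/kℤ → W` (`k = |W|`) whose consecutive
ratios are simple reflections and with `θ(2t+1) = s₂ · θ(2t)` for every `t`. -/
theorem exists_two_convenient_hamiltonianCircuitMap_path_rank_three
    {W : Type*} [Group W] [Finite W]
    (M : CoxeterMatrix (Fin 3)) (cs : CoxeterSystem M W)
    (h13 : M 0 2 = 2) (h12 : M 0 1 ∈ ({3, 4} : Set ℕ)) (h23 : M 1 2 ∈ ({3, 4} : Set ℕ)) :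
    ∃ θ : ZMod (Nat.card W) → W, Function.Bijective θ ∧
      (∀ t, θ (t + 1) * (θ t)⁻¹ ∈ Set.range cs.simple) ∧
      (∀ t : ZMod (Nat.card W), θ (2 * t + 1) = cs.simple 1 * θ (2 * t)) :=
  exists_two_convenient_hamiltonianCircuitMap_path_rank_three_general cs.simple (orderOf_simple cs)
    (commute_simple_of_eq_two cs h13) cs.subgroup_closure_range_simple
end

section
/- Let (W, S) be the Coxeter system of type B₃ over B = {1, 2, 3}, i.e. with Coxeter matrix M 1 2 = 4, M 2 3 = 3, M 1 3 = 2. Let (i₁, …, i₄₈) be the sequence (1,2,1,2,1,2,3,2,1,2,1,2,3,2,1,2,3,2,1,2,3,2,3,2,1,2,1,2,1,2,3,2,1,2,1,2,3,2,1,2,3,2,1,2,3,2,3,2), and define x₀ = 1 and x_k = s_{i_k} · x_{k−1} for 1 ≤ k ≤ 48. Then x₀, x₁, …, x₄₇ are pairwise distinct and exhaust W (so |W| = 48), and x₄₈ = 1; hence this sequence traces a Hamilton circuit of the Cayley graph of the Weyl group of type B₃, in which every second edge is labeled s₂. -/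
/-!
The upper bound `|W| ≤ 48` comes from coset enumeration along the chain `⟨s₁, s₂⟩ < W`: the
parabolic subgroup is dihedral of order at most `8`, and a point that it fixes has at most the six
translates `p, s₃p, s₂s₃p, s₁s₂s₃p, s₂s₁s₂s₃p, s₃s₂s₁s₂s₃p`, on which `W` acts as on the letters
`±1, ±2, ±3`. Conversely, the images of `x₀, …, x₄₇` under the homomorphism from `W` to signed
permutations are distinct. So the `x_k` exhaust `W` and the homomorphism is injective, and
`x₄₈ = 1` can be checked on signed permutations.
-/

/-- The label sequence (s₁,s₂,s₁,s₂,s₁,s₂,s₃,s₂,…) of the Hamilton circuit of the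
Weyl group of type B₃, written with `0`-indexed generators (`0 ↦ s₁`, `1 ↦ s₂`,
`2 ↦ s₃`). -/
def b3HamiltonSeq : List (Fin 3) :=
  [0, 1, 0, 1, 0, 1, 2, 1, 0, 1, 0, 1, 2, 1, 0, 1, 2, 1, 0, 1, 2, 1, 2, 1,
   0, 1, 0, 1, 0, 1, 2, 1, 0, 1, 0, 1, 2, 1, 0, 1, 2, 1, 0, 1, 2, 1, 2, 1]

open scoped Pointwise

section Enumeration

variable {G α : Type*} [Group G] [MulAction G α]

theorem smul_mem_of_mem_closure {S : Set G} {t : Set α} (ht : t.Finite)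
    (hS : ∀ s ∈ S, ∀ x ∈ t, s • x ∈ t) {g : G} (hg : g ∈ Subgroup.closure S) {x : α}
    (hx : x ∈ t) : g • x ∈ t := by
  have hle : Subgroup.closure S ≤ MulAction.stabilizer G t :=
    (Subgroup.closure_le _).2 fun s hs ↦ (MulAction.mem_stabilizer_set' ht).2 fun x ↦ hS s hs x
  exact (MulAction.mem_stabilizer_set.1 (hle hg) x).2 hx

theorem enatCard_le_mul_of_quotient (H : Subgroup G) {m n : ℕ∞}
    (hquot : ENat.card (G ⧸ H) ≤ m) (hH : ENat.card H ≤ n) : ENat.card G ≤ m * n := by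
  rw [ENat.card_congr H.groupEquivQuotientProdSubgroup, ENat.card_prod]
  gcongr

end Enumeration

section Involutions

variable {G : Type*} [Group G] {a b : G}

theorem mul_pow_eq_swap_mul_pow (ha : a * a = 1) (hb : b * b = 1) {k l : ℕ}
    (hab : (a * b) ^ (k + l) = 1) : (a * b) ^ k = (b * a) ^ l := by
  rw [pow_add] at hab
  rw [eq_inv_of_mul_eq_one_left hab, ← inv_pow, mul_inv_rev, inv_eq_of_mul_eq_one_left ha,
    inv_eq_of_mul_eq_one_left hb]

theorem enatCard_closure_pair_le (ha : a * a = 1) (hb : b * b = 1) {m : ℕ} (hm : m ≠ 0)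
    (hab : (a * b) ^ m = 1) : ENat.card (Subgroup.closure {a, b}) ≤ 2 * m := by
  let Z : Set G := (Subgroup.zpowers (a * b) : Set G)
  have hfin : Z.Finite := finite_zpowers.2 (isOfFinOrder_iff_pow_eq_one.2 ⟨m, hm.pos, hab⟩)
  have hcard : Z.encard ≤ m := by
    have := hfin.to_subtype
    rw [Set.encard, ENat.card_eq_coe_natCard, SetLike.coe_sort_coe, Nat.card_zpowers]
    exact_mod_cast orderOf_le_of_pow_eq_one hm.pos hab
  have hstable : ∀ s ∈ ({a, b} : Set G), ∀ g ∈ Z ∪ a • Z, s • g ∈ Z ∪ a • Z := by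
    have hrot : a * b ∈ Subgroup.zpowers (a * b) := Subgroup.mem_zpowers _
    have hrot_inv : b * a = (a * b)⁻¹ := by
      rw [mul_inv_rev, inv_eq_of_mul_eq_one_left ha, inv_eq_of_mul_eq_one_left hb]
    rintro s (rfl | rfl) g (hg | ⟨z, hz, rfl⟩)
    · exact .inr ⟨g, hg, rfl⟩
    · left
      simpa only [smul_smul, ha, one_smul] using hz
    · refine .inr ⟨a * s * g, mul_mem hrot hg, ?_⟩
      simp only [smul_eq_mul, ← mul_assoc, ha, one_mul]
    · left
      simp only [smul_smul, hrot_inv]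
      exact mul_mem (inv_mem hrot) hz
  have hsub : (Subgroup.closure {a, b} : Set G) ⊆ Z ∪ a • Z := fun g hg ↦ by
    simpa using smul_mem_of_mem_closure (hfin.union hfin.smul_set) hstable hg
      (.inl (one_mem (Subgroup.zpowers (a * b))))
  calc ENat.card (Subgroup.closure {a, b}) ≤ (Z ∪ a • Z).encard := Set.encard_le_encard hsub
    _ ≤ Z.encard + (a • Z).encard := Set.encard_union_le _ _
    _ = 2 * Z.encard := by rw [Set.encard_smul_set, two_mul]
    _ ≤ 2 * m := by gcongr

end Involutions

section WeightPath

/-- The candidate orbit of a point `p` fixed by the parabolic subgroup `⟨a, b⟩` of a group of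
type B₃ with simple reflections `a, b, c`: consecutive points are exchanged by `c, b, a, b, c`, as
are the consecutive weights of the vector representation of type B₃. -/
def b3WeightPath {G α : Type*} [SMul G α] (a b c : G) (p : α) : Set α :=
  {p, c • p, b • c • p, a • b • c • p, b • a • b • c • p, c • b • a • b • c • p}

theorem encard_b3WeightPath_le {G α : Type*} [SMul G α] (a b c : G) (p : α) :
    (b3WeightPath a b c p).encard ≤ 6 := by
  classical
  rw [b3WeightPath, Set.encard_eq_coe_toFinset_card]
  simp only [Set.toFinset_insert, Set.toFinset_singleton]
  exact_mod_cast Finset.card_le_six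

variable {G α : Type*} [Group G] [MulAction G α] {a b c : G}

theorem smul_mem_b3WeightPath (ha : a * a = 1) (hb : b * b = 1) (hc : c * c = 1)
    (hab : a * b * a * b = b * a * b * a) (hbc : b * c * b = c * b * c) (hac : a * c = c * a)
    {p : α} (hap : a • p = p) (hbp : b • p = p) :
    ∀ s ∈ ({a, b, c} : Set G), ∀ x ∈ b3WeightPath a b c p, s • x ∈ b3WeightPath a b c p := by
  have haa (x : α) : a • a • x = x := by rw [smul_smul, ha, one_smul]
  have hbb (x : α) : b • b • x = x := by rw [smul_smul, hb, one_smul]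
  have hcc (x : α) : c • c • x = x := by rw [smul_smul, hc, one_smul]
  have hac' (x : α) : a • c • x = c • a • x := by rw [smul_smul, hac, mul_smul]
  have hbc' (x : α) : b • c • b • x = c • b • c • x := by
    simpa only [mul_smul] using congrArg (· • x) hbc
  have hab' (x : α) : a • b • a • b • x = b • a • b • a • x := by
    simpa only [mul_smul] using congrArg (· • x) hab
  have fix₁ : a • c • p = c • p := by rw [hac', hap]
  have fix₂ : c • b • c • p = b • c • p := by rw [← hbc', hbp]
  have fix₃ : c • a • b • c • p = a • b • c • p := by rw [← hac', fix₂]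
  have fix₄ : a • b • a • b • c • p = b • a • b • c • p := by rw [hab', fix₁]
  have fix₅ : a • c • b • a • b • c • p = c • b • a • b • c • p := by rw [hac', fix₄]
  have fix₅' : b • c • b • a • b • c • p = c • b • a • b • c • p := by rw [hbc', fix₃]
  simp [b3WeightPath, haa, hbb, hcc, hap, hbp, fix₁, fix₂, fix₃, fix₄, fix₅, fix₅']

theorem enatCard_le_six_of_b3Relations [MulAction.IsPretransitive G α]
    (hgen : Subgroup.closure {a, b, c} = ⊤) (ha : a * a = 1) (hb : b * b = 1) (hc : c * c = 1)
    (hab : a * b * a * b = b * a * b * a) (hbc : b * c * b = c * b * c) (hac : a * c = c * a)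
    {p : α} (hap : a • p = p) (hbp : b • p = p) : ENat.card α ≤ 6 := by
  have hfin : (b3WeightPath a b c p).Finite :=
    Set.finite_of_encard_le_coe (encard_b3WeightPath_le a b c p)
  have huniv : b3WeightPath a b c p = Set.univ := Set.eq_univ_of_forall fun x ↦ by
    obtain ⟨g, rfl⟩ := MulAction.exists_smul_eq G p x
    exact smul_mem_of_mem_closure hfin (smul_mem_b3WeightPath ha hb hc hab hbc hac hap hbp)
      (hgen ▸ Subgroup.mem_top g) (Set.mem_insert p _)
  rw [← Set.encard_univ, ← huniv]
  exact encard_b3WeightPath_le a b c p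

end WeightPath

section CardBound

theorem enatCard_le_of_b3Relations {G : Type*} [Group G] {a b c : G}
    (hgen : Subgroup.closure {a, b, c} = ⊤) (ha : a * a = 1) (hb : b * b = 1) (hc : c * c = 1)
    (hab : (a * b) ^ 4 = 1) (hbc : (b * c) ^ 3 = 1) (hac : (a * c) ^ 2 = 1) : ENat.card G ≤ 48 := by
  have braid_ab : a * b * a * b = b * a * b * a := by
    simpa only [pow_two, ← mul_assoc] using mul_pow_eq_swap_mul_pow (k := 2) (l := 2) ha hb hab
  have braid_bc : b * c * b = c * b * c := by
    have h := mul_pow_eq_swap_mul_pow (k := 2) (l := 1) hb hc hbc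
    rw [pow_two, pow_one, ← mul_assoc] at h
    rw [← h, mul_assoc _ c c, hc, mul_one]
  have comm_ac : a * c = c * a := by
    simpa only [pow_one] using mul_pow_eq_swap_mul_pow (k := 1) (l := 1) ha hc hac
  let H : Subgroup G := Subgroup.closure {a, b}
  have hfix {g : G} (hg : g ∈ ({a, b} : Set G)) : g • ((1 : G) : G ⧸ H) = (1 : G) := by
    rw [MulAction.Quotient.smul_coe, smul_eq_mul, mul_one, QuotientGroup.eq, mul_one]
    exact inv_mem (Subgroup.subset_closure hg)
  have hindex : ENat.card (G ⧸ H) ≤ 6 :=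
    enatCard_le_six_of_b3Relations hgen ha hb hc braid_ab braid_bc comm_ac
      (hfix (by simp)) (hfix (by simp))
  exact (enatCard_le_mul_of_quotient H hindex
    (enatCard_closure_pair_le ha hb four_ne_zero hab)).trans_eq (by norm_num)

theorem enatCard_le_of_coxeterSystemB3 {W : Type*} [Group W] {M : CoxeterMatrix (Fin 3)}
    (cs : CoxeterSystem M W) (h12 : M 0 1 = 4) (h23 : M 1 2 = 3) (h13 : M 0 2 = 2) :
    ENat.card W ≤ 48 := by
  have hrange : Set.range cs.simple = {cs.simple 0, cs.simple 1, cs.simple 2} := by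
    ext w
    simp [Fin.exists_fin_succ, eq_comm]
  exact enatCard_le_of_b3Relations (hrange ▸ cs.subgroup_closure_range_simple)
    (cs.simple_mul_simple_self 0) (cs.simple_mul_simple_self 1) (cs.simple_mul_simple_self 2)
    (by simpa only [h12] using cs.simple_mul_simple_pow 0 1)
    (by simpa only [h23] using cs.simple_mul_simple_pow 1 2)
    (by simpa only [h13] using cs.simple_mul_simple_pow 0 2)

end CardBound

section Walk

theorem circuit_of_injOn_comp {α β : Type*} {n : ℕ} {x : ℕ → α} {f : α → β}
    (hcard : ENat.card α ≤ n) (hinj : Set.InjOn (f ∘ x) (Set.Iio n))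
    (hclosed : f (x n) = f (x 0)) :
    Set.InjOn x (Set.Iio n) ∧ Set.SurjOn x (Set.Iio n) Set.univ ∧ Nat.card α = n ∧ x n = x 0 := by
  have hfin : Finite α := ENat.card_lt_top.1 (hcard.trans_lt (ENat.natCast_lt_top n))
  have hbij : Function.Bijective fun k : Fin n ↦ x k := by
    have hle : Nat.card α ≤ n := by rwa [ENat.card_eq_coe_natCard, Nat.cast_le] at hcard
    refine Function.Injective.bijective_of_nat_card_le
      (fun k l h ↦ Fin.ext (hinj k.2 l.2 (congrArg f h))) ?_
    rwa [Nat.card_fin]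
  have hf : Function.Injective f :=
    .of_comp_right (g := fun k : Fin n ↦ x k) (fun k l h ↦ Fin.ext (hinj k.2 l.2 h)) hbij.2
  refine ⟨hinj.of_comp, fun a _ ↦ ?_, ?_, hf hclosed⟩
  · obtain ⟨k, rfl⟩ := hbij.2 a
    exact ⟨k, k.2, rfl⟩
  · rw [← Nat.card_eq_of_bijective _ hbij, Nat.card_fin]

/-- The walk in the left Cayley graph that starts at `1` and whose `k`-th step, counted from `0`,
is multiplication by `s k` on the left. -/
def leftWalk {G : Type*} [MulOneClass G] (s : ℕ → G) : ℕ → G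
  | 0 => 1
  | k + 1 => s k * leftWalk s k

theorem map_eq_leftWalk {G H : Type*} [MulOneClass G] [MulOneClass H] (φ : G →* H)
    {n : ℕ} {s x : ℕ → G} (hx₀ : x 0 = 1) (hx : ∀ k < n, x (k + 1) = s k * x k) {k : ℕ}
    (hk : k ≤ n) :
    φ (x k) = leftWalk (φ ∘ s) k := by
  induction k with
  | zero => rw [hx₀, map_one, leftWalk]
  | succ k ih => rw [hx k hk, map_mul, ih (Nat.le_of_succ_le hk), leftWalk, Function.comp_apply]

end Walk

section SignedPermutations

/-- The simple reflections of type B₃ as signed permutations. The points `0, …, 5` of `Fin 6` stand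
for the letters `-3 < -2 < -1 < 1 < 2 < 3`; the reflection `0` changes the sign of `1`, and the
reflections `1` and `2` exchange `1, 2` and `2, 3`. -/
def b3SignedPerm : Fin 3 → Equiv.Perm (Fin 6) :=
  ![.swap 2 3, .swap 1 2 * .swap 3 4, .swap 0 1 * .swap 4 5]

theorem b3SignedPerm_isLiftable {M : CoxeterMatrix (Fin 3)} (h12 : M 0 1 = 4) (h23 : M 1 2 = 3)
    (h13 : M 0 2 = 2) : M.IsLiftable b3SignedPerm := by
  intro i j
  fin_cases i <;> fin_cases j <;>
    simp only [Fin.zero_eta, Fin.mk_one, Fin.reduceFinMk, M.diagonal, h12, h23, h13,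
      M.symmetric 1 0, M.symmetric 2 0, M.symmetric 2 1] <;>
    decide +kernel

/-- The walk labelled by `b3HamiltonSeq` in the Cayley graph of the group of signed permutations. -/
def b3SignedPermWalk : ℕ → Equiv.Perm (Fin 6) :=
  leftWalk fun k ↦ b3SignedPerm (b3HamiltonSeq.getD k 0)

theorem b3SignedPermWalk_injOn : Set.InjOn b3SignedPermWalk (Set.Iio 48) := by
  have h : ∀ k < 48, ∀ l < 48, b3SignedPermWalk k = b3SignedPermWalk l → k = l := by
    decide +kernel
  exact fun k hk l hl ↦ h k hk l hl

theorem b3SignedPermWalk_closed : b3SignedPermWalk 48 = 1 := by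
  decide +kernel

end SignedPermutations

/-- The explicit word of Example 2.3 traces a Hamilton circuit of the Cayley graph of
the Weyl group of type B₃ (Coxeter matrix `M 1 2 = 4`, `M 2 3 = 3`, `M 1 3 = 2`):
setting `x₀ = 1` and `x_k = s_{i_k} · x_{k-1}` along the sequence `b3HamiltonSeq`,
the elements `x₀, …, x₄₇` are pairwise distinct and exhaust `W` (so `|W| = 48`),
and `x₄₈ = 1`. -/
theorem weylGroup_B3_explicit_hamiltonCircuit
    {W : Type*} [Group W]
    (M : CoxeterMatrix (Fin 3)) (cs : CoxeterSystem M W)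
    (h12 : M 0 1 = 4) (h23 : M 1 2 = 3) (h13 : M 0 2 = 2)
    (x : ℕ → W) (hx0 : x 0 = 1)
    (hx : ∀ k, k < 48 → x (k + 1) = cs.simple (b3HamiltonSeq.getD k 0) * x k) :
    (∀ k l, k < 48 → l < 48 → x k = x l → k = l) ∧
    (∀ w : W, ∃ k, k < 48 ∧ x k = w) ∧
    Nat.card W = 48 ∧
    x 48 = 1 := by
  let φ := cs.lift ⟨b3SignedPerm, b3SignedPerm_isLiftable h12 h23 h13⟩
  have hφ (k : ℕ) (hk : k ≤ 48) : φ (x k) = b3SignedPermWalk k := by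
    have hstep : φ ∘ (fun k ↦ cs.simple (b3HamiltonSeq.getD k 0)) =
        fun k ↦ b3SignedPerm (b3HamiltonSeq.getD k 0) :=
      funext fun k ↦ cs.lift_apply_simple _ _
    rw [map_eq_leftWalk φ hx0 hx hk, hstep, b3SignedPermWalk]
  have hφ_inj : Set.InjOn (φ ∘ x) (Set.Iio 48) :=
    b3SignedPermWalk_injOn.congr fun k hk ↦ (hφ k (le_of_lt hk)).symm
  have hφ_closed : φ (x 48) = φ (x 0) := by
    rw [hφ 48 le_rfl, b3SignedPermWalk_closed, hx0, map_one]
  obtain ⟨hinj, hsurj, hcard, hclosed⟩ :=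
    circuit_of_injOn_comp (enatCard_le_of_coxeterSystemB3 cs h12 h23 h13) hφ_inj hφ_closed
  exact ⟨fun k l hk hl ↦ hinj hk hl, fun w ↦ hsurj (Set.mem_univ w), hcard, hclosed.trans hx0⟩
end
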